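/- If q_{XY} has full support on 𝒳×𝒴 and δ1, δ2 are Hamming distortion measures, then there exist d1* > 0 and d2* > 0 such that for all distortion pairs with 0 ≤ d1 ≤ d1* and 0 ≤ d2 ≤ d2*, R_CR(d1,d2) = R(d1,d2) = max{ R_{X|Y}(d1), R_{Y|X}(d2) }. -/

import Mathlib

open scoped BigOperators Classical

noncomputable section

namespace TWR

/-- Base-2 Shannon entropy of a finitely supported distribution (with the
convention `0 * log 0 = 0`, automatic since `Real.logb 2 0 = 0`). -/
def H2 {α : Type} [Fintype α] (p : α → ℝ) : ℝ :=
  -∑ a, p a * Real.logb 2 (p a)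

/-- `p` is a probability mass function. -/
def IsPmf {α : Type} [Fintype α] (p : α → ℝ) : Prop :=
  (∀ a, 0 ≤ p a) ∧ ∑ a, p a = 1

/-- `W` is a conditional pmf. -/
def IsCondPmf {α β : Type} [Fintype β] (W : α → β → ℝ) : Prop :=
  ∀ a, IsPmf (W a)

/-- Mutual information `I(A;B)` (base 2) of a joint pmf on `α × β`. -/
def MI {α β : Type} [Fintype α] [Fintype β] (p : α × β → ℝ) : ℝ :=
  H2 (fun a => ∑ b, p (a, b)) + H2 (fun b => ∑ a, p (a, b)) - H2 p

/-- Conditional entropy `H(A|B)` of a joint pmf on `α × β`. -/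
def condH {α β : Type} [Fintype α] [Fintype β] (p : α × β → ℝ) : ℝ :=
  H2 p - H2 (fun b => ∑ a, p (a, b))

/-- Conditional mutual information `I(A;C|B)` of a joint pmf on `α × β × γ`,
conditioning on the middle coordinate (`I(A;C|B) = H(A,B)+H(B,C)-H(A,B,C)-H(B)`). -/
def condMI {α β γ : Type} [Fintype α] [Fintype β] [Fintype γ] (p : α × β × γ → ℝ) : ℝ :=
  H2 (fun ab : α × β => ∑ c, p (ab.1, ab.2, c)) +
    H2 (fun bc : β × γ => ∑ a, p (a, bc.1, bc.2)) -
    H2 p - H2 (fun b : β => ∑ a, ∑ c, p (a, b, c))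

/-- Markov chain `A − B − C` for a joint pmf on `α × β × γ`. -/
def Markov {α β γ : Type} [Fintype α] [Fintype β] [Fintype γ] (p : α × β × γ → ℝ) : Prop :=
  ∀ a b c, p (a, b, c) * (∑ a', ∑ c', p (a', b, c')) =
    (∑ c', p (a, b, c')) * (∑ a', p (a', b, c))

variable {𝒳 𝒴 Xh Yh 𝒲 𝒰 𝒱 : Type}
variable [Fintype 𝒳] [Fintype 𝒴] [Fintype Xh] [Fintype Yh]
variable [Fintype 𝒲] [Fintype 𝒰] [Fintype 𝒱]

/-- The i.i.d. block source. -/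
def iid (q : 𝒳 × 𝒴 → ℝ) (n : ℕ) : (Fin n → 𝒳) × (Fin n → 𝒴) → ℝ :=
  fun xy => ∏ i, q (xy.1 i, xy.2 i)

/-- Average distortion at receiver 1 of the RD code `(f, g1, ·)`. -/
def Delta1 (q : 𝒳 × 𝒴 → ℝ) (δ1 : 𝒳 → Xh → ℝ) {n m : ℕ}
    (f : (Fin n → 𝒳) × (Fin n → 𝒴) → Fin m)
    (g1 : Fin m × (Fin n → 𝒴) → Fin n → Xh) : ℝ :=
  ∑ xy : (Fin n → 𝒳) × (Fin n → 𝒴),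
    iid q n xy * ((n : ℝ)⁻¹ * ∑ i, δ1 (xy.1 i) (g1 (f xy, xy.2) i))

/-- Average distortion at receiver 2 of the RD code `(f, ·, g2)`. -/
def Delta2 (q : 𝒳 × 𝒴 → ℝ) (δ2 : 𝒴 → Yh → ℝ) {n m : ℕ}
    (f : (Fin n → 𝒳) × (Fin n → 𝒴) → Fin m)
    (g2 : Fin m × (Fin n → 𝒳) → Fin n → Yh) : ℝ :=
  ∑ xy : (Fin n → 𝒳) × (Fin n → 𝒴),
    iid q n xy * ((n : ℝ)⁻¹ * ∑ i, δ2 (xy.2 i) (g2 (f xy, xy.1) i))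

/-- `r` is a `(d1,d2)`-achievable rate (source coding). -/
def RDAchievable (q : 𝒳 × 𝒴 → ℝ) (δ1 : 𝒳 → Xh → ℝ) (δ2 : 𝒴 → Yh → ℝ)
    (d1 d2 r : ℝ) : Prop :=
  ∀ ε > (0 : ℝ), ∃ (n m : ℕ) (f : (Fin n → 𝒳) × (Fin n → 𝒴) → Fin m)
    (g1 : Fin m × (Fin n → 𝒴) → Fin n → Xh)
    (g2 : Fin m × (Fin n → 𝒳) → Fin n → Yh),
    0 < n ∧ Real.logb 2 m / n ≤ r + ε ∧
    Delta1 q δ1 f g1 ≤ d1 + ε ∧ Delta2 q δ2 f g2 ≤ d2 + ε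

/-- The rate-distortion function `R(d1,d2)`. -/
def RD (q : 𝒳 × 𝒴 → ℝ) (δ1 : 𝒳 → Xh → ℝ) (δ2 : 𝒴 → Yh → ℝ) (d1 d2 : ℝ) : ℝ :=
  sInf {r : ℝ | 0 ≤ r ∧ RDAchievable q δ1 δ2 d1 d2 r}

/-- `r` is `(d1,d2)`-achievable with common reconstructions. -/
def CRAchievable (q : 𝒳 × 𝒴 → ℝ) (δ1 : 𝒳 → Xh → ℝ) (δ2 : 𝒴 → Yh → ℝ)
    (d1 d2 r : ℝ) : Prop :=
  ∀ ε > (0 : ℝ), ∃ (n m : ℕ) (f : (Fin n → 𝒳) × (Fin n → 𝒴) → Fin m)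
    (g1 : Fin m × (Fin n → 𝒴) → Fin n → Xh)
    (g2 : Fin m × (Fin n → 𝒳) → Fin n → Yh)
    (φ1 : Fin m × (Fin n → 𝒴) → Fin n → Yh)
    (φ2 : Fin m × (Fin n → 𝒳) → Fin n → Xh),
    0 < n ∧ Real.logb 2 m / n ≤ r + ε ∧
    Delta1 q δ1 f g1 ≤ d1 + ε ∧ Delta2 q δ2 f g2 ≤ d2 + ε ∧
    (∑ xy : (Fin n → 𝒳) × (Fin n → 𝒴),
      if φ2 (f xy, xy.1) = g1 (f xy, xy.2) then 0 else iid q n xy) ≤ ε ∧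
    (∑ xy : (Fin n → 𝒳) × (Fin n → 𝒴),
      if φ1 (f xy, xy.2) = g2 (f xy, xy.1) then 0 else iid q n xy) ≤ ε

/-- The common-reconstruction rate-distortion function `R_CR(d1,d2)`. -/
def CRRD (q : 𝒳 × 𝒴 → ℝ) (δ1 : 𝒳 → Xh → ℝ) (δ2 : 𝒴 → Yh → ℝ) (d1 d2 : ℝ) : ℝ :=
  sInf {r : ℝ | 0 ≤ r ∧ CRAchievable q δ1 δ2 d1 d2 r}

/-- The conditional rate-distortion function `R_{X|Y}(d1)`. -/
def condRD (q : 𝒳 × 𝒴 → ℝ) (δ1 : 𝒳 → Xh → ℝ) (d1 : ℝ) : ℝ :=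
  sInf {r : ℝ | ∃ W : 𝒳 × 𝒴 → Xh → ℝ, IsCondPmf W ∧
    (∑ x, ∑ y, ∑ xh, q (x, y) * W (x, y) xh * δ1 x xh) ≤ d1 ∧
    r = condMI (fun t : 𝒳 × 𝒴 × Xh => q (t.1, t.2.1) * W (t.1, t.2.1) t.2.2)}

/-- Swap the two components of a joint source. -/
def swap (q : 𝒳 × 𝒴 → ℝ) : 𝒴 × 𝒳 → ℝ := fun t => q (t.2, t.1)

/-- The marginal rate-distortion function `R_X(d)`. -/
def margRD (qX : 𝒳 → ℝ) (δ1 : 𝒳 → Xh → ℝ) (d1 : ℝ) : ℝ :=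
  sInf {r : ℝ | ∃ W : 𝒳 → Xh → ℝ, IsCondPmf W ∧
    (∑ x, ∑ xh, qX x * W x xh * δ1 x xh) ≤ d1 ∧
    r = MI (fun t : 𝒳 × Xh => qX t.1 * W t.1 t.2)}

def margX (q : 𝒳 × 𝒴 → ℝ) : 𝒳 → ℝ := fun x => ∑ y, q (x, y)
def margY (q : 𝒳 × 𝒴 → ℝ) : 𝒴 → ℝ := fun y => ∑ x, q (x, y)

/-- The joint rate-distortion function `R_{XY}(d1,d2)`. -/
def jointRD (q : 𝒳 × 𝒴 → ℝ) (δ1 : 𝒳 → Xh → ℝ) (δ2 : 𝒴 → Yh → ℝ) (d1 d2 : ℝ) : ℝ :=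
  sInf {r : ℝ | ∃ W : 𝒳 × 𝒴 → Xh × Yh → ℝ, IsCondPmf W ∧
    (∑ xy : 𝒳 × 𝒴, ∑ z : Xh × Yh, q xy * W xy z * δ1 xy.1 z.1) ≤ d1 ∧
    (∑ xy : 𝒳 × 𝒴, ∑ z : Xh × Yh, q xy * W xy z * δ2 xy.2 z.2) ≤ d2 ∧
    r = MI (fun t : (𝒳 × 𝒴) × (Xh × Yh) => q t.1 * W t.1 t.2)}

/-- The Wyner–Ziv rate-distortion function `R^{WZ}_{X|Y}(d1)`
(with auxiliary alphabet of cardinality `|𝒳| + 1`). -/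
def wzRD (q : 𝒳 × 𝒴 → ℝ) (δ1 : 𝒳 → Xh → ℝ) (d1 : ℝ) : ℝ :=
  sInf {r : ℝ | ∃ p : Fin (Fintype.card 𝒳 + 1) × 𝒳 × 𝒴 → ℝ, IsPmf p ∧
    (∀ x y, (∑ a, p (a, x, y)) = q (x, y)) ∧ Markov p ∧
    (∃ π1 : Fin (Fintype.card 𝒳 + 1) × 𝒴 → Xh,
      (∑ a, ∑ x, ∑ y, p (a, x, y) * δ1 x (π1 (a, y))) ≤ d1) ∧
    r = condMI (fun t : 𝒳 × 𝒴 × Fin (Fintype.card 𝒳 + 1) => p (t.2.2, t.1, t.2.1))}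

/-- The set over which the single-letter CR formula
`max{I(X;X̂,Ŷ|Y), I(Y;X̂,Ŷ|X)}` is minimised. -/
def crFormulaSet (q : 𝒳 × 𝒴 → ℝ) (δ1 : 𝒳 → Xh → ℝ) (δ2 : 𝒴 → Yh → ℝ)
    (d1 d2 : ℝ) : Set ℝ :=
  {r : ℝ | ∃ W : 𝒳 × 𝒴 → Xh × Yh → ℝ, IsCondPmf W ∧
    (∑ x, ∑ y, ∑ z : Xh × Yh, q (x, y) * W (x, y) z * δ1 x z.1) ≤ d1 ∧
    (∑ x, ∑ y, ∑ z : Xh × Yh, q (x, y) * W (x, y) z * δ2 y z.2) ≤ d2 ∧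
    r = max
      (condMI (fun t : 𝒳 × 𝒴 × (Xh × Yh) => q (t.1, t.2.1) * W (t.1, t.2.1) t.2.2))
      (condMI (fun t : 𝒴 × 𝒳 × (Xh × Yh) => q (t.2.1, t.1) * W (t.2.1, t.1) t.2.2))}

/-- Joint law of source blocks and channel outputs for a JSC encoder. -/
def jscP (q : 𝒳 × 𝒴 → ℝ) (qUV : 𝒲 → 𝒰 × 𝒱 → ℝ) {n m : ℕ}
    (f : (Fin n → 𝒳) × (Fin n → 𝒴) → Fin m → 𝒲)
    (x : Fin n → 𝒳) (y : Fin n → 𝒴) (u : Fin m → 𝒰) (v : Fin m → 𝒱) : ℝ :=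
  (∏ i, q (x i, y i)) * ∏ j, qUV (f (x, y) j) (u j, v j)

/-- `(d1,d2)` is achievable by joint source-channel coding with source rate `κs`
and channel rate `κc` (bandwidth expansion `κc/κs`). -/
def JSCAchievable (q : 𝒳 × 𝒴 → ℝ) (qUV : 𝒲 → 𝒰 × 𝒱 → ℝ)
    (δ1 : 𝒳 → Xh → ℝ) (δ2 : 𝒴 → Yh → ℝ) (κs κc d1 d2 : ℝ) : Prop :=
  ∀ ε > (0 : ℝ), ∃ (t n m : ℕ) (f : (Fin n → 𝒳) × (Fin n → 𝒴) → Fin m → 𝒲)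
    (g1 : (Fin m → 𝒰) × (Fin n → 𝒴) → Fin n → Xh)
    (g2 : (Fin m → 𝒱) × (Fin n → 𝒳) → Fin n → Yh),
    0 < t ∧ (n : ℝ) = κs * t ∧ (m : ℝ) = κc * t ∧
    (∑ x : Fin n → 𝒳, ∑ y : Fin n → 𝒴, ∑ u : Fin m → 𝒰, ∑ v : Fin m → 𝒱,
      jscP q qUV f x y u v * ((n : ℝ)⁻¹ * ∑ i, δ1 (x i) (g1 (u, y) i))) ≤ d1 + ε ∧
    (∑ x : Fin n → 𝒳, ∑ y : Fin n → 𝒴, ∑ u : Fin m → 𝒰, ∑ v : Fin m → 𝒱,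
      jscP q qUV f x y u v * ((n : ℝ)⁻¹ * ∑ i, δ2 (y i) (g2 (v, x) i))) ≤ d2 + ε

/-- `(d1,d2)` is achievable by joint source-channel coding with common
reconstructions, source rate `κs` and channel rate `κc`. -/
def CRJSCAchievable (q : 𝒳 × 𝒴 → ℝ) (qUV : 𝒲 → 𝒰 × 𝒱 → ℝ)
    (δ1 : 𝒳 → Xh → ℝ) (δ2 : 𝒴 → Yh → ℝ) (κs κc d1 d2 : ℝ) : Prop :=
  ∀ ε > (0 : ℝ), ∃ (t n m : ℕ) (f : (Fin n → 𝒳) × (Fin n → 𝒴) → Fin m → 𝒲)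
    (g1 : (Fin m → 𝒰) × (Fin n → 𝒴) → Fin n → Xh)
    (g2 : (Fin m → 𝒱) × (Fin n → 𝒳) → Fin n → Yh)
    (φ1 : (Fin m → 𝒰) × (Fin n → 𝒴) → Fin n → Yh)
    (φ2 : (Fin m → 𝒱) × (Fin n → 𝒳) → Fin n → Xh),
    0 < t ∧ (n : ℝ) = κs * t ∧ (m : ℝ) = κc * t ∧
    (∑ x : Fin n → 𝒳, ∑ y : Fin n → 𝒴, ∑ u : Fin m → 𝒰, ∑ v : Fin m → 𝒱,
      jscP q qUV f x y u v * ((n : ℝ)⁻¹ * ∑ i, δ1 (x i) (g1 (u, y) i))) ≤ d1 + ε ∧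
    (∑ x : Fin n → 𝒳, ∑ y : Fin n → 𝒴, ∑ u : Fin m → 𝒰, ∑ v : Fin m → 𝒱,
      jscP q qUV f x y u v * ((n : ℝ)⁻¹ * ∑ i, δ2 (y i) (g2 (v, x) i))) ≤ d2 + ε ∧
    (∑ x : Fin n → 𝒳, ∑ y : Fin n → 𝒴, ∑ u : Fin m → 𝒰, ∑ v : Fin m → 𝒱,
      if φ2 (v, x) = g1 (u, y) then 0 else jscP q qUV f x y u v) ≤ ε ∧
    (∑ x : Fin n → 𝒳, ∑ y : Fin n → 𝒴, ∑ u : Fin m → 𝒰, ∑ v : Fin m → 𝒱,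
      if φ1 (u, y) = g2 (v, x) then 0 else jscP q qUV f x y u v) ≤ ε

/-- `I(W;U)` under the joint law `pW · qUV` (U-marginal of the broadcast channel). -/
def chMIU (qUV : 𝒲 → 𝒰 × 𝒱 → ℝ) (pW : 𝒲 → ℝ) : ℝ :=
  MI (fun t : 𝒲 × 𝒰 => pW t.1 * ∑ v, qUV t.1 (t.2, v))

/-- `I(W;V)` under the joint law `pW · qUV` (V-marginal of the broadcast channel). -/
def chMIV (qUV : 𝒲 → 𝒰 × 𝒱 → ℝ) (pW : 𝒲 → ℝ) : ℝ :=
  MI (fun t : 𝒲 × 𝒱 => pW t.1 * ∑ u, qUV t.1 (u, t.2))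

/-- The doubly symmetric binary source with crossover probability `ρ`. -/
def dsbs (ρ : ℝ) : Bool × Bool → ℝ :=
  fun t => if t.1 = t.2 then (1 - ρ) / 2 else ρ / 2

/-- The Hamming distortion measure. -/
def dHam {α : Type} : α → α → ℝ := fun a b => if a = b then 0 else 1

/-- The binary entropy function (base 2). -/
def binEnt (x : ℝ) : ℝ := -(x * Real.logb 2 x) - (1 - x) * Real.logb 2 (1 - x)

/-- A difference distortion measure built from a per-letter function of the
(modular) difference. -/
def diffD {l : ℕ} (δ : Fin l → ℝ) : Fin l → Fin l → ℝ := fun a b => δ (a - b)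

/-- Capacity of the modulo-additive channel with noise `pN` and input
distortion constraint `d`. -/
def Cadd {l : ℕ} (δ : Fin l → ℝ) (d : ℝ) (pN : Fin l → ℝ) : ℝ :=
  sSup {r : ℝ | ∃ pW : Fin l → ℝ, IsPmf pW ∧ (∑ w, pW w * δ w) ≤ d ∧
    r = MI (fun t : Fin l × Fin l => pW t.1 * pN (t.2 - t.1))}

/-- The minimax (worst-noise) capacity under distortion constraint `d`. -/
def Cworst {l : ℕ} (δ : Fin l → ℝ) (d : ℝ) : ℝ :=
  sInf {r : ℝ | ∃ pN : Fin l → ℝ, IsPmf pN ∧ (∑ x, pN x * δ x) ≤ d ∧ r = Cadd δ d pN}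

/-- Wyner's common information `K(X;Y)` (auxiliary alphabet of size 4). -/
def wynerK (q : 𝒳 × 𝒴 → ℝ) : ℝ :=
  sInf {r : ℝ | ∃ W : 𝒳 × 𝒴 → Fin 4 → ℝ, IsCondPmf W ∧
    Markov (fun t : 𝒳 × Fin 4 × 𝒴 => q (t.1, t.2.2) * W (t.1, t.2.2) t.2.1) ∧
    r = MI (fun t : (𝒳 × 𝒴) × Fin 4 => q t.1 * W t.1 t.2)}

/-- The one-description (Kimura–Uyematsu) upper bound `R_U*(d1,d2)`. -/
def oneDescUB (q : 𝒳 × 𝒴 → ℝ) (δ1 : 𝒳 → Xh → ℝ) (δ2 : 𝒴 → Yh → ℝ) (d1 d2 : ℝ) : ℝ :=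
  sInf {r : ℝ | ∃ W : 𝒳 × 𝒴 → Fin (Fintype.card 𝒳 * Fintype.card 𝒴 + 2) → ℝ,
    IsCondPmf W ∧
    (∃ π1 : Fin (Fintype.card 𝒳 * Fintype.card 𝒴 + 2) × 𝒴 → Xh,
      (∑ x, ∑ y, ∑ c, q (x, y) * W (x, y) c * δ1 x (π1 (c, y))) ≤ d1) ∧
    (∃ π2 : Fin (Fintype.card 𝒳 * Fintype.card 𝒴 + 2) × 𝒳 → Yh,
      (∑ x, ∑ y, ∑ c, q (x, y) * W (x, y) c * δ2 y (π2 (c, x))) ≤ d2) ∧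
    r = max
      (condMI (fun t : 𝒳 × 𝒴 × Fin (Fintype.card 𝒳 * Fintype.card 𝒴 + 2) =>
        q (t.1, t.2.1) * W (t.1, t.2.1) t.2.2))
      (condMI (fun t : 𝒴 × 𝒳 × Fin (Fintype.card 𝒳 * Fintype.card 𝒴 + 2) =>
        q (t.2.1, t.1) * W (t.2.1, t.1) t.2.2))}

end TWR

/-!
Lower bound: each receiver alone forces a rate. By Gibbs' inequality, `H(Xⁿ | M, Yⁿ)` is at most the
cross entropy against symmetric noise around the reconstruction, which depends only on the
distortion; so every code of rate `r` and distortion `d1` has `H(X|Y) - h(d1) ≤ r`, where `h(d1)` is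
the entropy of the symmetric noise. The same comparison with `n = 1` bounds `R_{X|Y}(d1)`.

Upper bound: since `q` is bounded below, for small distortions `q` is the output law of two
independent symmetric channels fed by some law of `(X̂, Ŷ)`. For this backward test channel
`I(X; X̂, Ŷ | Y)` and `I(Y; X̂, Ŷ | X)` both meet the lower bounds, and it remains to code for it
with common reconstructions. The encoder picks a codeword that looks jointly typical with both
source blocks and sends a random bin index of it; each receiver looks in that bin for the codeword
with large information density relative to its own block, so both find the same codeword.
-/

namespace TWR

section Mass

variable {α β κ : Type*} [Fintype α] [Fintype β] [Fintype κ]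

/-- The total weight that `p` gives to the event `E`; for a pmf, the probability of `E`. -/
def mass (p : α → ℝ) (E : α → Prop) : ℝ := ∑ a with E a, p a

theorem mass_eq_sum_ite (p : α → ℝ) (E : α → Prop) :
    mass p E = ∑ a, if E a then p a else 0 :=
  Finset.sum_filter _ _

theorem mass_comp_equiv (e : α ≃ β) (p : β → ℝ) (E : β → Prop) :
    mass (fun a => p (e a)) (fun a => E (e a)) = mass p E := by
  simp only [mass_eq_sum_ite]
  exact e.sum_comp fun b => if E b then p b else 0

theorem mass_add_mass_not (p : α → ℝ) (E : α → Prop) :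
    mass p E + mass p (fun a => ¬E a) = ∑ a, p a := by
  simp only [mass_eq_sum_ite, ← Finset.sum_add_distrib]
  exact Finset.sum_congr rfl fun a _ => by by_cases h : E a <;> simp [h]

variable {p : α → ℝ}

theorem mass_nonneg (hp : ∀ a, 0 ≤ p a) (E : α → Prop) : 0 ≤ mass p E :=
  Finset.sum_nonneg fun a _ => hp a

theorem mass_le_sum (hp : ∀ a, 0 ≤ p a) (E : α → Prop) : mass p E ≤ ∑ a, p a :=
  Finset.sum_le_sum_of_subset_of_nonneg (Finset.filter_subset _ _) fun a _ _ => hp a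

theorem mass_mono (hp : ∀ a, 0 ≤ p a) {E F : α → Prop} (h : ∀ a, 0 < p a → E a → F a) :
    mass p E ≤ mass p F := by
  simp only [mass_eq_sum_ite]
  refine Finset.sum_le_sum fun a _ => ?_
  rcases (hp a).eq_or_lt with h0 | h0
  · simp [← h0]
  · by_cases hE : E a
    · simp [hE, h a h0 hE]
    · simp only [hE, if_false]
      split_ifs <;> simp [h0.le]

theorem mass_or_le (hp : ∀ a, 0 ≤ p a) (E F : α → Prop) :
    mass p (fun a => E a ∨ F a) ≤ mass p E + mass p F := by
  simp only [mass_eq_sum_ite, ← Finset.sum_add_distrib]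
  refine Finset.sum_le_sum fun a _ => ?_
  by_cases hE : E a <;> by_cases hF : F a <;> simp [hE, hF, hp a]

theorem mass_exists_le_sum (hp : ∀ a, 0 ≤ p a) (E : κ → α → Prop) :
    mass p (fun a => ∃ k, E k a) ≤ ∑ k, mass p (E k) := by
  simp only [mass_eq_sum_ite]
  rw [Finset.sum_comm]
  refine Finset.sum_le_sum fun a _ => ?_
  have hterm : ∀ k ∈ Finset.univ, 0 ≤ if E k a then p a else 0 := fun k _ => by
    split_ifs <;> simp [hp a]
  split_ifs with h
  · obtain ⟨k, hk⟩ := h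
    simpa [hk] using Finset.single_le_sum hterm (Finset.mem_univ k)
  · exact Finset.sum_nonneg hterm

theorem mul_mass_le_sum_mul (hp : ∀ a, 0 ≤ p a) {X : α → ℝ} (hX : ∀ a, 0 ≤ X a) {c : ℝ}
    {E : α → Prop} (hE : ∀ a, E a → c ≤ X a) : c * mass p E ≤ ∑ a, p a * X a := by
  rw [mass_eq_sum_ite, Finset.mul_sum]
  refine Finset.sum_le_sum fun a _ => ?_
  split_ifs with h
  · rw [mul_comm]
    exact mul_le_mul_of_nonneg_left (hE a h) (hp a)
  · simpa using mul_nonneg (hp a) (hX a)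

theorem sum_mul_mass_comm (p : α → ℝ) (w : β → ℝ) (R : α → β → Prop) :
    ∑ b, w b * mass p (fun a => R a b) = ∑ a, p a * mass w (R a) := by
  simp only [mass_eq_sum_ite, Finset.mul_sum, mul_ite, mul_zero]
  rw [Finset.sum_comm]
  simp only [mul_comm]

theorem exists_le_of_sum_mul_le {w : β → ℝ} (hw : ∀ b, 0 ≤ w b) (hw1 : ∑ b, w b = 1)
    {Φ : β → ℝ} {c : ℝ} (h : ∑ b, w b * Φ b ≤ c) : ∃ b, Φ b ≤ c := by
  by_contra! hlt
  obtain ⟨b, -, hb⟩ : ∃ b ∈ Finset.univ, w b ≠ 0 :=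
    Finset.exists_ne_zero_of_sum_ne_zero (by rw [hw1]; exact one_ne_zero)
  have hlt_sum : ∑ b, w b * c < ∑ b, w b * Φ b :=
    Finset.sum_lt_sum (fun b _ => mul_le_mul_of_nonneg_left (hlt b).le (hw b))
      ⟨b, Finset.mem_univ b, mul_lt_mul_of_pos_left (hlt b) ((hw b).lt_of_ne' hb)⟩
  rw [← Finset.sum_mul, hw1, one_mul] at hlt_sum
  exact hlt_sum.not_ge h

end Mass

section Product

variable {ι α : Type*} [Fintype ι]

/-- The law of a family of independent variables with common law `p`. -/
def prodPmf (p : α → ℝ) (w : ι → α) : ℝ := ∏ i, p (w i)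

theorem prodPmf_nonneg {p : α → ℝ} (hp : ∀ a, 0 ≤ p a) (w : ι → α) : 0 ≤ prodPmf p w :=
  Finset.prod_nonneg fun i _ => hp (w i)

variable [DecidableEq ι] [Fintype α]

theorem sum_prodPmf_mul_prod (p : α → ℝ) (g : ι → α → ℝ) :
    ∑ w : ι → α, prodPmf p w * ∏ i, g i (w i) = ∏ i, ∑ a, p a * g i a := by
  simp only [prodPmf, ← Finset.prod_mul_distrib, Fintype.prod_sum]

theorem mass_prodPmf_forall (p : α → ℝ) (E : α → Prop) :
    mass (prodPmf p) (fun w : ι → α => ∀ i, E (w i)) = mass p E ^ Fintype.card ι := by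
  have h := sum_prodPmf_mul_prod (ι := ι) p fun _ a => if E a then 1 else 0
  simp only [mul_ite, mul_one, mul_zero, ← mass_eq_sum_ite, Finset.prod_const,
    Finset.card_univ] at h
  rw [← h, mass_eq_sum_ite]
  refine Finset.sum_congr rfl fun w _ => ?_
  rw [Finset.prod_ite_zero]
  simp

variable {p : α → ℝ}

theorem sum_prodPmf (hp : ∑ a, p a = 1) : ∑ w : ι → α, prodPmf p w = 1 := by
  simpa [hp] using sum_prodPmf_mul_prod (ι := ι) p fun _ _ => 1

theorem sum_prodPmf_mul_eval (hp : ∑ a, p a = 1) (φ : α → ℝ) (j : ι) :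
    ∑ w : ι → α, prodPmf p w * φ (w j) = ∑ a, p a * φ a := by
  have h := sum_prodPmf_mul_prod p fun i a => if i = j then φ a else 1
  rw [Fintype.prod_eq_single j fun i hi => by simp [hi, hp]] at h
  simpa using h

theorem mass_prodPmf_eval (hp : ∑ a, p a = 1) (E : α → Prop) (j : ι) :
    mass (prodPmf p) (fun w : ι → α => E (w j)) = mass p E := by
  simpa [mass_eq_sum_ite] using sum_prodPmf_mul_eval hp (fun a => if E a then 1 else 0) j

theorem sum_prodPmf_mul_eval_mul_eval (hp : ∑ a, p a = 1) (φ ψ : α → ℝ) {j k : ι}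
    (hjk : j ≠ k) :
    ∑ w : ι → α, prodPmf p w * (φ (w j) * ψ (w k)) = (∑ a, p a * φ a) * ∑ a, p a * ψ a := by
  have h := sum_prodPmf_mul_prod p fun i a => if i = j then φ a else if i = k then ψ a else 1
  rw [Fintype.prod_eq_mul j k hjk fun i hi => by simp [hi.1, hi.2, hp]] at h
  simp only [if_true, hjk.symm, if_false] at h
  rw [← h]
  refine Finset.sum_congr rfl fun w _ => ?_
  rw [Fintype.prod_eq_mul j k hjk fun i hi => by simp [hi.1, hi.2]]
  simp [hjk.symm]

theorem mass_prodPmf_eval_eq_eval (hp : ∑ a, p a = 1) {j k : ι} (hjk : j ≠ k) :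
    mass (prodPmf p) (fun w : ι → α => w j = w k) = ∑ a, p a ^ 2 := by
  have hindicator (w : ι → α) : (if w j = w k then prodPmf p w else 0) =
      ∑ a, prodPmf p w * ((if w j = a then 1 else 0) * if w k = a then 1 else 0) := by
    simp [eq_comm]
  rw [mass_eq_sum_ite, Finset.sum_congr rfl fun w _ => hindicator w, Finset.sum_comm]
  refine Finset.sum_congr rfl fun a _ => ?_
  rw [sum_prodPmf_mul_eval_mul_eval hp (fun b => if b = a then 1 else 0)
    (fun b => if b = a then 1 else 0) hjk]
  simp [sq]

theorem sum_prodPmf_mul_sum_sq (hp : ∑ a, p a = 1) {φ : α → ℝ} (hφ : ∑ a, p a * φ a = 0) :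
    ∑ w : ι → α, prodPmf p w * (∑ i, φ (w i)) ^ 2 = Fintype.card ι * ∑ a, p a * φ a ^ 2 := by
  have hpair (j k : ι) : ∑ w : ι → α, prodPmf p w * (φ (w j) * φ (w k)) =
      if j = k then ∑ a, p a * φ a ^ 2 else 0 := by
    split_ifs with hjk
    · simp only [hjk, ← sq]
      exact sum_prodPmf_mul_eval hp (fun a => φ a ^ 2) k
    · rw [sum_prodPmf_mul_eval_mul_eval hp φ φ hjk, hφ, zero_mul]
  calc
    _ = ∑ j, ∑ k, ∑ w : ι → α, prodPmf p w * (φ (w j) * φ (w k)) := by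
      simp_rw [sq, Finset.sum_mul_sum, Finset.mul_sum]
      rw [Finset.sum_comm]
      exact Finset.sum_congr rfl fun j _ => Finset.sum_comm
    _ = _ := by simp [hpair]

theorem mass_prodPmf_deviation_le (hp0 : ∀ a, 0 ≤ p a) (hp : ∑ a, p a = 1) (φ : α → ℝ) {c : ℝ}
    (hc : 0 < c) :
    mass (prodPmf p) (fun w : ι → α =>
        ¬|∑ i, φ (w i) - Fintype.card ι * ∑ a, p a * φ a| ≤ c) ≤
      Fintype.card ι * (∑ a, p a * (φ a - ∑ b, p b * φ b) ^ 2) / c ^ 2 := by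
  set μ := ∑ a, p a * φ a
  have hcentred : ∑ a, p a * (φ a - μ) = 0 := by
    simp only [mul_sub, Finset.sum_sub_distrib, ← Finset.sum_mul, hp, one_mul, μ, sub_self]
  rw [le_div_iff₀ (by positivity), mul_comm, ← sum_prodPmf_mul_sum_sq hp hcentred]
  refine mul_mass_le_sum_mul (prodPmf_nonneg hp0) (fun w => sq_nonneg _) fun w hw => ?_
  rw [Finset.sum_sub_distrib, Finset.sum_const, Finset.card_univ, nsmul_eq_mul]
  exact (pow_le_pow_left₀ hc.le (not_le.1 hw).le 2).trans_eq (sq_abs _)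

theorem mass_prodPmf_not_typical_le {κ : Type*} [Fintype κ] (hp0 : ∀ a, 0 ≤ p a)
    (hp : ∑ a, p a = 1) (φ : κ → α → ℝ) {c : ℝ} (hc : 0 < c) :
    mass (prodPmf p) (fun w : ι → α =>
        ¬∀ k, |∑ i, φ k (w i) - Fintype.card ι * ∑ a, p a * φ k a| ≤ c) ≤
      Fintype.card ι * (∑ k, ∑ a, p a * (φ k a - ∑ b, p b * φ k b) ^ 2) / c ^ 2 := by
  simp only [not_forall]
  refine (mass_exists_le_sum (prodPmf_nonneg hp0) _).trans ?_
  rw [Finset.mul_sum, Finset.sum_div]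
  exact Finset.sum_le_sum fun k _ => mass_prodPmf_deviation_le hp0 hp (φ k) hc

end Product

section Entropy

variable {α β γ : Type} [Fintype α] [Fintype β] [Fintype γ]

theorem H2_le_crossEntropy {p r : α → ℝ} (hp : IsPmf p) (hr : ∀ a, 0 ≤ r a) (hr1 : ∑ a, r a ≤ 1)
    (hpr : ∀ a, 0 < p a → 0 < r a) : H2 p ≤ -∑ a, p a * Real.logb 2 (r a) := by
  have hterm (a : α) : p a * (Real.log (r a) - Real.log (p a)) ≤ r a - p a := by
    rcases (hp.1 a).eq_or_lt with h0 | h0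
    · simp [← h0, hr a]
    · rw [← Real.log_div (hpr a h0).ne' h0.ne']
      calc
        p a * Real.log (r a / p a) ≤ p a * (r a / p a - 1) :=
          mul_le_mul_of_nonneg_left (Real.log_le_sub_one_of_pos (div_pos (hpr a h0) h0)) h0.le
        _ = r a - p a := by field_simp
  have hsum : ∑ a, p a * (Real.log (r a) - Real.log (p a)) ≤ 0 :=
    (Finset.sum_le_sum fun a _ => hterm a).trans (by rw [Finset.sum_sub_distrib, hp.2]; linarith)
  simp only [mul_sub, Finset.sum_sub_distrib] at hsum
  simp only [H2, Real.logb, ← mul_div_assoc, ← Finset.sum_div, neg_div']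
  exact div_le_div_of_nonneg_right (by linarith) (Real.log_nonneg one_le_two)

theorem H2_comp_equiv (e : α ≃ β) (p : β → ℝ) : H2 (fun a => p (e a)) = H2 p :=
  congrArg Neg.neg (e.sum_comp fun b => p b * Real.logb 2 (p b))

theorem IsPmf.comp_equiv {p : β → ℝ} (hp : IsPmf p) (e : α ≃ β) : IsPmf fun a => p (e a) :=
  ⟨fun a => hp.1 (e a), (e.sum_comp p).trans hp.2⟩

theorem IsPmf.margX {p : α × β → ℝ} (hp : IsPmf p) : IsPmf (margX p) :=
  ⟨fun _ => Finset.sum_nonneg fun _ _ => hp.1 _, by rw [← hp.2, Fintype.sum_prod_type]; rfl⟩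

theorem IsPmf.margY {p : α × β → ℝ} (hp : IsPmf p) : IsPmf (margY p) :=
  ⟨fun _ => Finset.sum_nonneg fun _ _ => hp.1 _, by rw [← hp.2, Fintype.sum_prod_type_right]; rfl⟩

theorem IsPmf.le_margX {p : α × β → ℝ} (hp : IsPmf p) (t : α × β) : p t ≤ TWR.margX p t.1 :=
  Finset.single_le_sum (f := fun b => p (t.1, b)) (fun _ _ => hp.1 _) (Finset.mem_univ t.2)

theorem IsPmf.le_margY {p : α × β → ℝ} (hp : IsPmf p) (t : α × β) : p t ≤ TWR.margY p t.2 :=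
  Finset.single_le_sum (f := fun a => p (a, t.2)) (fun _ _ => hp.1 _) (Finset.mem_univ t.1)

theorem sum_mul_fst (p : α × β → ℝ) (φ : α → ℝ) :
    ∑ t, p t * φ t.1 = ∑ a, margX p a * φ a := by
  simp only [Fintype.sum_prod_type, margX, Finset.sum_mul]

theorem sum_mul_snd (p : α × β → ℝ) (φ : β → ℝ) :
    ∑ t, p t * φ t.2 = ∑ b, margY p b * φ b := by
  simp only [Fintype.sum_prod_type_right, margY, Finset.sum_mul]

theorem condH_eq_H2_add (p : α × β → ℝ) :
    condH p = H2 p + ∑ b, margY p b * Real.logb 2 (margY p b) :=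
  sub_neg_eq_add _ _

theorem condH_le_crossEntropy {p V : α × β → ℝ} (hp : IsPmf p) (hV : ∀ t, 0 ≤ V t)
    (hV1 : ∀ b, ∑ a, V (a, b) ≤ 1) (hpV : ∀ t, 0 < p t → 0 < V t) :
    condH p ≤ -∑ t, p t * Real.logb 2 (V t) := by
  have hmarg (t) (ht : 0 < p t) : 0 < margY p t.2 := ht.trans_le (hp.le_margY t)
  have hgibbs := H2_le_crossEntropy (r := fun t => margY p t.2 * V t) hp
    (fun t => mul_nonneg (hp.margY.1 _) (hV t))
    (by
      rw [Fintype.sum_prod_type_right, ← hp.margY.2]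
      refine Finset.sum_le_sum fun b _ => ?_
      simp only [← Finset.mul_sum]
      exact mul_le_of_le_one_right (hp.margY.1 b) (hV1 b))
    fun t ht => mul_pos (hmarg t ht) (hpV t ht)
  have hsplit (t) : p t * Real.logb 2 (margY p t.2 * V t) =
      p t * Real.logb 2 (margY p t.2) + p t * Real.logb 2 (V t) := by
    rcases (hp.1 t).eq_or_lt with h0 | h0
    · simp [← h0]
    · rw [Real.logb_mul (hmarg t h0).ne' (hpV t h0).ne', mul_add]
  simp only [hsplit, Finset.sum_add_distrib,
    sum_mul_snd p fun b => Real.logb 2 (margY p b)] at hgibbs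
  linarith [condH_eq_H2_add p]

theorem condH_eq_crossEntropy {p : α × β → ℝ} (hp : IsPmf p) :
    condH p = -∑ t, p t * Real.logb 2 (p t / margY p t.2) := by
  have hsplit (t) : p t * Real.logb 2 (p t / margY p t.2) =
      p t * Real.logb 2 (p t) - p t * Real.logb 2 (margY p t.2) := by
    rcases (hp.1 t).eq_or_lt with h0 | h0
    · simp [← h0]
    · rw [Real.logb_div h0.ne' (h0.trans_le (hp.le_margY t)).ne', mul_sub]
  simp only [hsplit, Finset.sum_sub_distrib, sum_mul_snd p fun b => Real.logb 2 (margY p b)]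
  rw [condH_eq_H2_add, H2]
  ring

theorem MI_eq_H2_sub_condH (p : α × β → ℝ) : MI p = H2 (margX p) - condH p :=
  (sub_sub_eq_add_sub _ _ _).symm

theorem MI_nonneg {p : α × β → ℝ} (hp : IsPmf p) : 0 ≤ MI p := by
  have h := condH_le_crossEntropy (V := fun t => margX p t.1) hp (fun t => hp.margX.1 _)
    (fun _ => hp.margX.2.le) fun t ht => ht.trans_le (hp.le_margX t)
  rw [sum_mul_fst p fun a => Real.logb 2 (margX p a)] at h
  rw [MI_eq_H2_sub_condH]
  exact sub_nonneg.2 h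

theorem condMI_eq_condH_sub_condH (p : α × β × γ → ℝ) :
    condMI p = condH (fun ab : α × β => ∑ c, p (ab.1, ab.2, c)) - condH p := by
  simp only [condMI, condH]
  ring

theorem condMI_nonneg {p : α × β × γ → ℝ} (hp : IsPmf p) : 0 ≤ condMI p := by
  set r : α × β → ℝ := margX fun t => p (Equiv.prodAssoc α β γ t)
  have hp' := hp.comp_equiv (Equiv.prodAssoc α β γ)
  have hr : IsPmf r := hp'.margX
  have hpr (t : α × β × γ) : p t ≤ r (t.1, t.2.1) := hp'.le_margX ((t.1, t.2.1), t.2.2)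
  have h := condH_le_crossEntropy (V := fun t => r (t.1, t.2.1) / margY r t.2.1) hp
    (fun t => div_nonneg (hr.1 _) (hr.margY.1 _))
    (fun b => by simp only [← Finset.sum_div]; exact div_self_le_one _)
    fun t ht => div_pos (ht.trans_le (hpr t)) (ht.trans_le ((hpr t).trans (hr.le_margY _)))
  have hmarg : ∑ t, p t * Real.logb 2 (r (t.1, t.2.1) / margY r t.2.1) =
      ∑ s, r s * Real.logb 2 (r s / margY r s.2) := by
    rw [← (Equiv.prodAssoc α β γ).sum_comp]
    exact sum_mul_fst (fun t => p (Equiv.prodAssoc α β γ t))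
      fun s => Real.logb 2 (r s / margY r s.2)
  rw [hmarg, ← condH_eq_crossEntropy hr] at h
  rw [condMI_eq_condH_sub_condH]
  exact sub_nonneg.2 h

theorem H2_prodPmf {ι : Type} [Fintype ι] [DecidableEq ι] {p : α → ℝ} (hp : IsPmf p) :
    H2 (prodPmf (ι := ι) p) = Fintype.card ι * H2 p := by
  have hlog (w : ι → α) : prodPmf p w * Real.logb 2 (prodPmf p w) =
      ∑ i, prodPmf p w * Real.logb 2 (p (w i)) := by
    by_cases h : ∃ i, p (w i) = 0
    · obtain ⟨i, hi⟩ := h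
      have h0 : prodPmf p w = 0 := Finset.prod_eq_zero (Finset.mem_univ i) hi
      simp [h0]
    · push Not at h
      rw [← Finset.mul_sum, prodPmf, Real.logb_prod _ _ fun i _ => h i]
  simp only [H2, hlog]
  rw [Finset.sum_comm]
  simp [sum_prodPmf_mul_eval hp.2 fun a => Real.logb 2 (p a)]

end Entropy

section Density

variable {α β : Type} [Fintype α] [Fintype β] {p : α × β → ℝ}

/-- The information density `log (p(a,b) / (p(a) p(b)))`, whose expectation is `I(A;B)`. -/
def logDensity (p : α × β → ℝ) (t : α × β) : ℝ :=
  Real.logb 2 (p t) - Real.logb 2 (margX p t.1 * margY p t.2)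

/-- The likelihood ratio of `p` to the product of its marginals is at most `c` at `t`. -/
def DensityLE (p : α × β → ℝ) (c : ℝ) (t : α × β) : Prop :=
  p t ≤ c * (margX p t.1 * margY p t.2)

/-- The likelihood ratio of `p` to the product of its marginals is at least `c` at `t`. -/
def DensityGE (p : α × β → ℝ) (c : ℝ) (t : α × β) : Prop :=
  c * (margX p t.1 * margY p t.2) ≤ p t

theorem MI_eq_sum_mul_logDensity (hp : IsPmf p) : MI p = ∑ t, p t * logDensity p t := by
  have hsplit (t) : p t * logDensity p t = p t * Real.logb 2 (p t) -
      p t * Real.logb 2 (margX p t.1) - p t * Real.logb 2 (margY p t.2) := by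
    rcases (hp.1 t).eq_or_lt with h0 | h0
    · simp [← h0]
    · rw [logDensity, Real.logb_mul (h0.trans_le (hp.le_margX t)).ne'
        (h0.trans_le (hp.le_margY t)).ne']
      ring
  simp only [hsplit, Finset.sum_sub_distrib, sum_mul_fst p fun a => Real.logb 2 (margX p a),
    sum_mul_snd p fun b => Real.logb 2 (margY p b)]
  simp only [MI, H2, margX, margY]
  ring

theorem sum_margX_mul_mass_densityGE_le (hp : IsPmf p) {c : ℝ} (hc : 0 < c) :
    ∑ a, margX p a * mass (margY p) (fun b => DensityGE p c (a, b)) ≤ c⁻¹ := by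
  rw [← one_div, le_div_iff₀' hc, ← hp.2, Fintype.sum_prod_type]
  simp only [mass_eq_sum_ite, Finset.mul_sum]
  refine Finset.sum_le_sum fun a _ => Finset.sum_le_sum fun b _ => ?_
  split_ifs with h
  · exact h
  · simpa using hp.1 (a, b)

end Density

section Triple

variable {A B U : Type}

/-- The law of `(B, U)` when `((A, B), U)` has law `p`. -/
def dropFst [Fintype A] (p : (A × B) × U → ℝ) (t : B × U) : ℝ := ∑ a, p ((a, t.1), t.2)

/-- The law of `(A, U)` when `((A, B), U)` has law `p`. -/
def dropSnd [Fintype B] (p : (A × B) × U → ℝ) (t : A × U) : ℝ := ∑ b, p ((t.1, b), t.2)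

theorem margX_dropFst [Fintype A] [Fintype U] (p : (A × B) × U → ℝ) :
    margX (dropFst p) = margY (margX p) :=
  funext fun _ => Finset.sum_comm

theorem margX_dropSnd [Fintype B] [Fintype U] (p : (A × B) × U → ℝ) :
    margX (dropSnd p) = margX (margX p) :=
  funext fun _ => Finset.sum_comm

variable [Fintype A] [Fintype B]

theorem margY_dropFst (p : (A × B) × U → ℝ) : margY (dropFst p) = margY p :=
  funext fun u => (Fintype.sum_prod_type_right fun s => p (s, u)).symm

theorem margY_dropSnd (p : (A × B) × U → ℝ) : margY (dropSnd p) = margY p :=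
  funext fun u => (Fintype.sum_prod_type fun s => p (s, u)).symm

variable [Fintype U]

theorem IsPmf.dropFst {p : (A × B) × U → ℝ} (hp : IsPmf p) : IsPmf (dropFst p) :=
  ⟨fun _ => Finset.sum_nonneg fun _ _ => hp.1 _, by
    rw [Fintype.sum_prod_type_right, ← hp.margY.2, ← margY_dropFst]; rfl⟩

theorem IsPmf.dropSnd {p : (A × B) × U → ℝ} (hp : IsPmf p) : IsPmf (dropSnd p) :=
  ⟨fun _ => Finset.sum_nonneg fun _ _ => hp.1 _, by
    rw [Fintype.sum_prod_type_right, ← hp.margY.2, ← margY_dropSnd]; rfl⟩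

theorem condMI_eq_MI_sub_MI_dropFst (p : (A × B) × U → ℝ) :
    condMI (fun t : A × B × U => p ((t.1, t.2.1), t.2.2)) = MI p - MI (dropFst p) := by
  have hH : H2 (fun t : A × B × U => p ((t.1, t.2.1), t.2.2)) = H2 p :=
    H2_comp_equiv (Equiv.prodAssoc A B U).symm p
  change H2 (margX p) + H2 (dropFst p) - _ - H2 (margY (margX p)) =
    H2 (margX p) + H2 (margY p) - H2 p -
      (H2 (margX (dropFst p)) + H2 (margY (dropFst p)) - H2 (dropFst p))
  rw [hH, margX_dropFst, margY_dropFst]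
  ring

theorem condMI_eq_MI_sub_MI_dropSnd (p : (A × B) × U → ℝ) :
    condMI (fun t : B × A × U => p ((t.2.1, t.1), t.2.2)) = MI p - MI (dropSnd p) := by
  have hH : H2 (fun t : B × A × U => p ((t.2.1, t.1), t.2.2)) = H2 p :=
    H2_comp_equiv ((Equiv.prodAssoc B A U).symm.trans ((Equiv.prodComm B A).prodCongr (.refl U))) p
  have hXY : H2 (fun s : B × A => margX p (s.2, s.1)) = H2 (margX p) :=
    H2_comp_equiv (Equiv.prodComm B A) (margX p)
  change H2 (fun s : B × A => margX p (s.2, s.1)) + H2 (dropSnd p) - _ - H2 (margX (margX p)) =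
    H2 (margX p) + H2 (margY p) - H2 p -
      (H2 (margX (dropSnd p)) + H2 (margY (dropSnd p)) - H2 (dropSnd p))
  rw [hH, hXY, margX_dropSnd, margY_dropSnd]
  ring

end Triple

section RandomCoding

theorem exists_decoder {κ β Y U : Type*} [Nonempty U] (T : Y → U → Prop) (c : κ → U)
    (b : κ → β) :
    ∃ g : β × Y → U, ∀ y i, T y (c i) → (∀ j, j ≠ i → b j = b i → ¬T y (c j)) →
      g (b i, y) = c i := by
  refine ⟨fun my => if h : ∃ i, b i = my.1 ∧ T my.2 (c i) then c h.choose else Classical.ofNonempty,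
    fun y i hT huniq => ?_⟩
  have h : ∃ j, b j = b i ∧ T y (c j) := ⟨i, rfl, hT⟩
  have hchoose : h.choose = i := by
    by_contra hne
    exact huniq _ hne h.choose_spec.1 h.choose_spec.2
  exact (dif_pos h).trans (by rw [hchoose])

theorem exists_codebook {σ U : Type*} [Fintype σ] [Fintype U] (P : σ → ℝ) {π : U → ℝ}
    (hπ0 : ∀ u, 0 ≤ π u) (hπ : ∑ u, π u = 1) (G T : σ → U → Prop) (N : ℕ) (a : ℝ) :
    ∃ c : Fin N → U,
      mass P (fun s => ∀ i, ¬G s (c i)) + a * ∑ j, mass P (fun s => T s (c j)) ≤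
        ∑ s, P s * (1 - mass π (G s)) ^ N + a * (N * ∑ s, P s * mass π (T s)) := by
  refine exists_le_of_sum_mul_le (prodPmf_nonneg hπ0) (sum_prodPmf hπ) (le_of_eq ?_)
  have hmiss : ∑ c : Fin N → U, prodPmf π c * mass P (fun s => ∀ i, ¬G s (c i)) =
      ∑ s, P s * (1 - mass π (G s)) ^ N := by
    rw [sum_mul_mass_comm P _ fun s (c : Fin N → U) => ∀ i, ¬G s (c i)]
    refine Finset.sum_congr rfl fun s _ => ?_
    rw [mass_prodPmf_forall π fun u => ¬G s u, Fintype.card_fin, ← hπ,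
      ← mass_add_mass_not π (G s), add_sub_cancel_left]
  have hfalse : ∑ c : Fin N → U, prodPmf π c * ∑ j, mass P (fun s => T s (c j)) =
      N * ∑ s, P s * mass π (T s) := by
    simp only [Finset.mul_sum]
    rw [Finset.sum_comm]
    simp_rw [fun j : Fin N => sum_mul_mass_comm P (prodPmf π) fun s (c : Fin N → U) => T s (c j),
      mass_prodPmf_eval hπ, Finset.sum_const, Finset.card_univ, Fintype.card_fin, nsmul_eq_mul,
      Finset.mul_sum]
  simp_rw [mul_add, mul_left_comm _ a, Finset.sum_add_distrib, ← Finset.mul_sum, hmiss, hfalse]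

theorem exists_binning {σ κ : Type*} [Fintype σ] [Fintype κ] {P : σ → ℝ} (hP : ∀ s, 0 ≤ P s)
    {M : ℕ} (hM : 0 < M) (idx : σ → κ) (R : κ → σ → Prop) :
    ∃ b : κ → Fin M, mass P (fun s => ∃ j, j ≠ idx s ∧ b j = b (idx s) ∧ R j s) ≤
      (M : ℝ)⁻¹ * ∑ j, mass P (R j) := by
  set u : Fin M → ℝ := fun _ => (M : ℝ)⁻¹
  have hu0 (m) : 0 ≤ u m := by positivity
  have hu : ∑ m, u m = 1 := by simp [u, hM.ne']
  have hcollide (j : κ) (s : σ) : P s * mass (prodPmf u)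
      (fun b : κ → Fin M => j ≠ idx s ∧ b j = b (idx s) ∧ R j s) ≤
        (M : ℝ)⁻¹ * if R j s then P s else 0 := by
    by_cases h : j ≠ idx s ∧ R j s
    · have hpair : mass (prodPmf u) (fun b : κ → Fin M => b j = b (idx s)) = (M : ℝ)⁻¹ := by
        rw [mass_prodPmf_eval_eq_eval hu h.1]
        simp [u, sq, hM.ne']
      simp [h, hpair, mul_comm]
    · have hempty : mass (prodPmf u)
          (fun b : κ → Fin M => j ≠ idx s ∧ b j = b (idx s) ∧ R j s) = 0 := by
        rw [mass_eq_sum_ite]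
        exact Finset.sum_eq_zero fun b _ => if_neg fun hb => h ⟨hb.1, hb.2.2⟩
      rw [hempty, mul_zero]
      exact mul_nonneg (by positivity) (by split_ifs; exacts [hP s, le_rfl])
  refine exists_le_of_sum_mul_le (prodPmf_nonneg hu0) (sum_prodPmf hu) ?_
  calc
    _ ≤ ∑ b : κ → Fin M, prodPmf u b *
          ∑ j, mass P (fun s => j ≠ idx s ∧ b j = b (idx s) ∧ R j s) :=
      Finset.sum_le_sum fun b _ =>
        mul_le_mul_of_nonneg_left (mass_exists_le_sum hP _) (prodPmf_nonneg hu0 b)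
    _ = ∑ j, ∑ s, P s * mass (prodPmf u)
          (fun b : κ → Fin M => j ≠ idx s ∧ b j = b (idx s) ∧ R j s) := by
      simp only [Finset.mul_sum]
      rw [Finset.sum_comm]
      exact Finset.sum_congr rfl fun j _ => sum_mul_mass_comm P _
        fun s (b : κ → Fin M) => j ≠ idx s ∧ b j = b (idx s) ∧ R j s
    _ ≤ _ := by
      simp only [mass_eq_sum_ite P, Finset.mul_sum]
      exact Finset.sum_le_sum fun j _ => Finset.sum_le_sum fun s _ => hcollide j s

variable {A B U : Type*} [Fintype A] [Fintype B]

theorem exists_code_of_codebook [Nonempty U] {P : A × B → ℝ} (hP : ∀ s, 0 ≤ P s)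
    {G : A × B → U → Prop} {T1 : B → U → Prop} {T2 : A → U → Prop}
    (hT1 : ∀ s u, G s u → T1 s.2 u) (hT2 : ∀ s u, G s u → T2 s.1 u) {N M : ℕ} (hN : 0 < N)
    (hM : 0 < M) (c : Fin N → U) :
    ∃ (f : A × B → Fin M) (g1 : Fin M × B → U) (g2 : Fin M × A → U),
      mass P (fun s => ¬(G s (g1 (f s, s.2)) ∧ g1 (f s, s.2) = g2 (f s, s.1))) ≤
        mass P (fun s => ∀ i, ¬G s (c i)) +
          (M : ℝ)⁻¹ * ∑ j, mass P (fun s => T1 s.2 (c j) ∨ T2 s.1 (c j)) := by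
  have : Nonempty (Fin N) := ⟨⟨0, hN⟩⟩
  have hidx (s) : ∃ i, (∃ i, G s (c i)) → G s (c i) := by
    by_cases h : ∃ i, G s (c i)
    · exact h.imp fun i hi _ => hi
    · exact ⟨Classical.ofNonempty, fun h' => (h h').elim⟩
  choose idx hG using hidx
  obtain ⟨b, hb⟩ := exists_binning hP hM idx fun j s => T1 s.2 (c j) ∨ T2 s.1 (c j)
  obtain ⟨g1, hg1⟩ := exists_decoder T1 c b
  obtain ⟨g2, hg2⟩ := exists_decoder T2 c b
  refine ⟨fun s => b (idx s), g1, g2, ?_⟩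
  refine (mass_mono hP ?_).trans ((mass_or_le hP (fun s => ∀ i, ¬G s (c i)) _).trans
    (add_le_add_right hb _))
  intro s _ hfail
  by_contra! hgood
  obtain ⟨⟨i, hi⟩, huniq⟩ := hgood
  have hGs := hG s ⟨i, hi⟩
  have h1 := hg1 s.2 (idx s) (hT1 s _ hGs) fun j hj hbj => (huniq j hj hbj).1
  have h2 := hg2 s.1 (idx s) (hT2 s _ hGs) fun j hj hbj => (huniq j hj hbj).2
  exact hfail ⟨by rwa [h1], h1.trans h2.symm⟩

variable [Fintype U]

theorem exists_code_of_tests {P : A × B → ℝ} (hP : ∀ s, 0 ≤ P s) {π : U → ℝ}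
    (hπ0 : ∀ u, 0 ≤ π u) (hπ : ∑ u, π u = 1)
    {G : A × B → U → Prop} {T1 : B → U → Prop} {T2 : A → U → Prop}
    (hT1 : ∀ s u, G s u → T1 s.2 u) (hT2 : ∀ s u, G s u → T2 s.1 u) {N M : ℕ} (hN : 0 < N)
    (hM : 0 < M) :
    ∃ (f : A × B → Fin M) (g1 : Fin M × B → U) (g2 : Fin M × A → U),
      mass P (fun s => ¬(G s (g1 (f s, s.2)) ∧ g1 (f s, s.2) = g2 (f s, s.1))) ≤
        ∑ s, P s * (1 - mass π (G s)) ^ N +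
          (M : ℝ)⁻¹ * (N * ∑ s, P s * (mass π (T1 s.2) + mass π (T2 s.1))) := by
  obtain ⟨u, -, -⟩ := Finset.exists_ne_zero_of_sum_ne_zero (hπ.trans_ne one_ne_zero)
  have : Nonempty U := ⟨u⟩
  obtain ⟨c, hc⟩ := exists_codebook P hπ0 hπ G (fun s u => T1 s.2 u ∨ T2 s.1 u) N (M : ℝ)⁻¹
  obtain ⟨f, g1, g2, hcode⟩ := exists_code_of_codebook hP hT1 hT2 hN hM c
  refine ⟨f, g1, g2, hcode.trans (hc.trans ?_)⟩
  gcongr with s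
  · exact hP s
  · exact mass_or_le hπ0 _ _

end RandomCoding

section OneShot

theorem one_sub_pow_le_one_sub_add_exp {x y g : ℝ} (hx0 : 0 ≤ x) (hx1 : x ≤ 1) (hg : x * y ≤ g)
    (hg1 : g ≤ 1) (N : ℕ) : (1 - g) ^ N ≤ 1 - x + Real.exp (-(N * y)) := by
  have hbase : 1 - g ≤ Real.exp (-(x * y)) := by linarith [Real.add_one_le_exp (-(x * y))]
  have hconv := convexOn_exp.2 (Set.mem_univ 0) (Set.mem_univ (-(N * y)))
    (sub_nonneg.2 hx1) hx0 (sub_add_cancel 1 x)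
  simp only [smul_eq_mul, mul_zero, zero_add, Real.exp_zero, mul_one] at hconv
  calc
    (1 - g) ^ N ≤ Real.exp (-(x * y)) ^ N := pow_le_pow_left₀ (sub_nonneg.2 hg1) hbase N
    _ = Real.exp (x * -(N * y)) := by rw [← Real.exp_nat_mul]; ring_nf
    _ ≤ 1 - x + x * Real.exp (-(N * y)) := hconv
    _ ≤ 1 - x + Real.exp (-(N * y)) := by
      gcongr
      exact mul_le_of_le_one_left (Real.exp_pos _).le hx1

theorem sum_margX_mul_one_sub_mass_pow_le {S U : Type} [Fintype S] [Fintype U] {p : S × U → ℝ}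
    (hp : IsPmf p) {γ : ℝ} (hγ : 0 < γ) {G : S → U → Prop}
    (hG : ∀ s u, G s u → DensityLE p γ (s, u)) (N : ℕ) :
    ∑ s, margX p s * (1 - mass (margY p) (G s)) ^ N ≤
      mass p (fun t => ¬G t.1 t.2) + Real.exp (-(N / γ)) := by
  have hrow (s : S) : margX p s * (1 - mass (margY p) (G s)) ^ N ≤
      mass (fun u => p (s, u)) (fun u => ¬G s u) + margX p s * Real.exp (-(N / γ)) := by
    have hcompl : margX p s = mass (fun u => p (s, u)) (G s) + mass _ fun u => ¬G s u :=
      (mass_add_mass_not _ _).symm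
    have hr0 : 0 ≤ mass (fun u => p (s, u)) (G s) := mass_nonneg (fun u => hp.1 _) _
    have hr1 : 0 ≤ mass (fun u => p (s, u)) fun u => ¬G s u := mass_nonneg (fun u => hp.1 _) _
    rcases (hp.margX.1 s).eq_or_lt with h0 | h0
    · simpa [← h0] using hr1
    have hdensity : mass (fun u => p (s, u)) (G s) ≤
        margX p s * (γ * mass (margY p) (G s)) := by
      simp only [mass_eq_sum_ite, Finset.mul_sum]
      refine Finset.sum_le_sum fun u _ => ?_
      split_ifs with h
      · exact (hG s u h).trans_eq (by ring)
      · simp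
    have hcover : mass (fun u => p (s, u)) (G s) / margX p s * γ⁻¹ ≤ mass (margY p) (G s) := by
      rwa [← div_eq_mul_inv, div_le_iff₀' hγ, div_le_iff₀' h0]
    have hpow := one_sub_pow_le_one_sub_add_exp (div_nonneg hr0 h0.le)
      ((div_le_one h0).2 (by linarith)) hcover
      ((mass_le_sum hp.margY.1 _).trans_eq hp.margY.2) N
    calc
      _ ≤ margX p s * (1 - mass (fun u => p (s, u)) (G s) / margX p s +
            Real.exp (-(N * γ⁻¹))) := mul_le_mul_of_nonneg_left hpow h0.le
      _ = margX p s - mass (fun u => p (s, u)) (G s) + margX p s * Real.exp (-(N / γ)) := by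
        rw [← div_eq_mul_inv]
        field_simp
      _ = _ := by rw [hcompl]; ring
  refine (Finset.sum_le_sum fun s _ => hrow s).trans_eq ?_
  rw [Finset.sum_add_distrib, ← Finset.sum_mul, hp.margX.2, one_mul]
  simp only [mass_eq_sum_ite, Fintype.sum_prod_type]

theorem exists_code_of_density {A B U : Type} [Fintype A] [Fintype B] [Fintype U]
    {p : (A × B) × U → ℝ} (hp : IsPmf p) (E : (A × B) × U → Prop) {γ γ1 γ2 : ℝ} (hγ : 0 < γ)
    (hγ1 : 0 < γ1) (hγ2 : 0 < γ2) {N M : ℕ} (hN : 0 < N) (hM : 0 < M) :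
    ∃ (f : A × B → Fin M) (g1 : Fin M × B → U) (g2 : Fin M × A → U),
      mass (margX p) (fun s => ¬(E (s, g1 (f s, s.2)) ∧ g1 (f s, s.2) = g2 (f s, s.1))) ≤
        mass p (fun t => ¬(E t ∧ DensityLE p γ t ∧ DensityGE (dropFst p) γ1 (t.1.2, t.2) ∧
          DensityGE (dropSnd p) γ2 (t.1.1, t.2))) +
        Real.exp (-(N / γ)) + (M : ℝ)⁻¹ * (N * (γ1⁻¹ + γ2⁻¹)) := by
  set G : A × B → U → Prop := fun s u => E (s, u) ∧ DensityLE p γ (s, u) ∧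
    DensityGE (dropFst p) γ1 (s.2, u) ∧ DensityGE (dropSnd p) γ2 (s.1, u)
  obtain ⟨f, g1, g2, hcode⟩ := exists_code_of_tests hp.margX.1 hp.margY.1 hp.margY.2
    (G := G) (T1 := fun b u => DensityGE (dropFst p) γ1 (b, u))
    (T2 := fun a u => DensityGE (dropSnd p) γ2 (a, u))
    (fun s u h => h.2.2.1) (fun s u h => h.2.2.2) hN hM
  have hmiss := sum_margX_mul_one_sub_mass_pow_le hp hγ (G := G) (fun s u h => h.2.1) N
  have hfalse1 := sum_margX_mul_mass_densityGE_le hp.dropFst hγ1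
  have hfalse2 := sum_margX_mul_mass_densityGE_le hp.dropSnd hγ2
  rw [margX_dropFst, margY_dropFst, ← sum_mul_snd] at hfalse1
  rw [margX_dropSnd, margY_dropSnd, ← sum_mul_fst] at hfalse2
  refine ⟨f, g1, g2, (mass_mono hp.margX.1 fun s _ hs h => hs ⟨h.1.1, h.2⟩).trans
    (hcode.trans (add_le_add hmiss ?_))⟩
  simp only [mul_add, Finset.sum_add_distrib] at hfalse1 hfalse2 ⊢
  gcongr

end OneShot

section Block

theorem IsPmf.prodPmf {ι α : Type} [Fintype ι] [DecidableEq ι] [Fintype α] {p : α → ℝ}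
    (hp : IsPmf p) : IsPmf (prodPmf (ι := ι) p) :=
  ⟨prodPmf_nonneg hp.1, sum_prodPmf hp.2⟩

theorem margX_iid {α β : Type} [Fintype β] (q : α × β → ℝ) (n : ℕ) :
    margX (iid q n) = prodPmf (margX q) :=
  funext fun a => (Fintype.prod_sum fun i b => q (a i, b)).symm

theorem margY_iid {α β : Type} [Fintype α] (q : α × β → ℝ) (n : ℕ) :
    margY (iid q n) = prodPmf (margY q) :=
  funext fun b => (Fintype.prod_sum fun i a => q (a, b i)).symm

section Pair

variable {α β : Type} [Fintype α] [Fintype β] {q : α × β → ℝ}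

theorem IsPmf.iid (hq : IsPmf q) (n : ℕ) : IsPmf (iid q n) :=
  (hq.prodPmf (ι := Fin n)).comp_equiv (Equiv.arrowProdEquivProdArrow _ _ _).symm

theorem H2_iid (hq : IsPmf q) (n : ℕ) : H2 (iid q n) = n * H2 q := by
  rw [← Fintype.card_fin n, ← H2_prodPmf (ι := Fin n) hq, Fintype.card_fin]
  exact H2_comp_equiv (Equiv.arrowProdEquivProdArrow (Fin n) _ _).symm (prodPmf q)

theorem condH_iid (hq : IsPmf q) (n : ℕ) : condH (iid q n) = n * condH q := by
  change H2 (iid q n) - H2 (margY (iid q n)) = n * (H2 q - H2 (margY q))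
  rw [H2_iid hq, margY_iid, H2_prodPmf hq.margY, Fintype.card_fin]
  ring

theorem sum_logDensity {ι : Type*} [Fintype ι] (hq : IsPmf q) {w : ι → α × β}
    (hw : ∀ i, 0 < q (w i)) :
    ∑ i, logDensity q (w i) = Real.logb 2 (prodPmf q w) -
      Real.logb 2 (prodPmf (margX q) (fun i => (w i).1) *
        prodPmf (margY q) fun i => (w i).2) := by
  have hX (i) : margX q (w i).1 ≠ 0 := ((hw i).trans_le (hq.le_margX _)).ne'
  have hY (i) : margY q (w i).2 ≠ 0 := ((hw i).trans_le (hq.le_margY _)).ne'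
  simp only [logDensity, Finset.sum_sub_distrib, prodPmf, ← Finset.prod_mul_distrib]
  rw [Real.logb_prod _ _ fun i _ => (hw i).ne',
    Real.logb_prod _ _ fun i _ => mul_ne_zero (hX i) (hY i)]

theorem prodPmf_margX_mul_prodPmf_margY_pos {ι : Type*} [Fintype ι] (hq : IsPmf q)
    {w : ι → α × β} (hw : ∀ i, 0 < q (w i)) :
    0 < prodPmf (margX q) (fun i => (w i).1) * prodPmf (margY q) fun i => (w i).2 :=
  mul_pos (Finset.prod_pos fun i _ => (hw i).trans_le (hq.le_margX _))
    (Finset.prod_pos fun i _ => (hw i).trans_le (hq.le_margY _))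

theorem prodPmf_le_of_sum_logDensity_le {ι : Type*} [Fintype ι] (hq : IsPmf q) {w : ι → α × β}
    (hw : ∀ i, 0 < q (w i)) {c : ℝ} (hc : ∑ i, logDensity q (w i) ≤ c) :
    prodPmf q w ≤ 2 ^ c * (prodPmf (margX q) (fun i => (w i).1) *
      prodPmf (margY q) fun i => (w i).2) := by
  have hw0 : 0 < prodPmf q w := Finset.prod_pos fun i _ => hw i
  have hpos := prodPmf_margX_mul_prodPmf_margY_pos hq hw
  rw [sum_logDensity hq hw] at hc
  rw [← Real.logb_le_logb one_lt_two hw0 (by positivity),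
    Real.logb_mul (by positivity) hpos.ne', Real.logb_rpow two_pos one_lt_two.ne']
  linarith

theorem le_prodPmf_of_le_sum_logDensity {ι : Type*} [Fintype ι] (hq : IsPmf q) {w : ι → α × β}
    (hw : ∀ i, 0 < q (w i)) {c : ℝ} (hc : c ≤ ∑ i, logDensity q (w i)) :
    2 ^ c * (prodPmf (margX q) (fun i => (w i).1) * prodPmf (margY q) fun i => (w i).2) ≤
      prodPmf q w := by
  have hw0 : 0 < prodPmf q w := Finset.prod_pos fun i _ => hw i
  have hpos := prodPmf_margX_mul_prodPmf_margY_pos hq hw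
  rw [sum_logDensity hq hw] at hc
  rw [← Real.logb_le_logb one_lt_two (by positivity) hw0,
    Real.logb_mul (by positivity) hpos.ne', Real.logb_rpow two_pos one_lt_two.ne']
  linarith

theorem densityGE_iid (hq : IsPmf q) {n : ℕ} {a : Fin n → α} {b : Fin n → β}
    (hw : ∀ i, 0 < q (a i, b i)) {c : ℝ} (hc : c ≤ ∑ i, logDensity q (a i, b i)) :
    DensityGE (iid q n) (2 ^ c) (a, b) := by
  rw [DensityGE, margX_iid, margY_iid]
  exact le_prodPmf_of_le_sum_logDensity hq hw hc

end Pair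

section Triple

variable {A B U : Type}

/-- Regroups three blocks of length `n` into one block of triples. -/
def zipTriple (n : ℕ) :
    ((Fin n → A) × (Fin n → B)) × (Fin n → U) ≃ (Fin n → (A × B) × U) where
  toFun t i := ((t.1.1 i, t.1.2 i), t.2 i)
  invFun w := ((fun i => (w i).1.1, fun i => (w i).1.2), fun i => (w i).2)

/-- The law of the three blocks formed by `n` independent copies of `((A, B), U)`. -/
def iidTriple (p : (A × B) × U → ℝ) (n : ℕ) (t : ((Fin n → A) × (Fin n → B)) × (Fin n → U)) : ℝ :=
  prodPmf p (zipTriple n t)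

theorem margX_iidTriple [Fintype U] (p : (A × B) × U → ℝ) (n : ℕ) :
    margX (iidTriple p n) = iid (margX p) n :=
  funext fun s => (Fintype.prod_sum fun i u => p ((s.1 i, s.2 i), u)).symm

theorem dropFst_iidTriple [Fintype A] (p : (A × B) × U → ℝ) (n : ℕ) :
    dropFst (iidTriple p n) = iid (dropFst p) n :=
  funext fun t => (Fintype.prod_sum fun i a => p ((a, t.1 i), t.2 i)).symm

theorem dropSnd_iidTriple [Fintype B] (p : (A × B) × U → ℝ) (n : ℕ) :
    dropSnd (iidTriple p n) = iid (dropSnd p) n :=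
  funext fun t => (Fintype.prod_sum fun i b => p ((t.1 i, b), t.2 i)).symm

variable [Fintype A] [Fintype B]

theorem margY_iidTriple (p : (A × B) × U → ℝ) (n : ℕ) :
    margY (iidTriple p n) = prodPmf (margY p) := by
  rw [← margY_dropFst, dropFst_iidTriple, margY_iid, margY_dropFst]

variable [Fintype U] {p : (A × B) × U → ℝ}

theorem IsPmf.iidTriple (hp : IsPmf p) (n : ℕ) : IsPmf (iidTriple p n) :=
  hp.prodPmf.comp_equiv (zipTriple n)

theorem densityLE_iidTriple (hp : IsPmf p) {n : ℕ} {t : ((Fin n → A) × (Fin n → B)) × (Fin n → U)}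
    (ht : ∀ i, 0 < p (zipTriple n t i)) {c : ℝ}
    (hc : ∑ i, logDensity p (zipTriple n t i) ≤ c) : DensityLE (iidTriple p n) (2 ^ c) t := by
  rw [DensityLE, margX_iidTriple, margY_iidTriple]
  exact prodPmf_le_of_sum_logDensity_le hp ht hc

theorem mass_iidTriple_not_typical_le {κ : Type*} [Fintype κ] (hp : IsPmf p)
    (φ : κ → (A × B) × U → ℝ) (n : ℕ) {c : ℝ} (hc : 0 < c) :
    mass (iidTriple p n) (fun t =>
        ¬∀ k, |∑ i, φ k (zipTriple n t i) - n * ∑ s, p s * φ k s| ≤ c) ≤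
      n * (∑ k, ∑ s, p s * (φ k s - ∑ s, p s * φ k s) ^ 2) / c ^ 2 := by
  have h := mass_prodPmf_not_typical_le (ι := Fin n) hp.1 hp.2 φ hc
  rw [Fintype.card_fin, ← mass_comp_equiv (zipTriple n)] at h
  exact h

theorem eventually_mass_iidTriple_not_typical_le {κ : Type*} [Finite κ] (hp : IsPmf p)
    (φ : κ → (A × B) × U → ℝ) {δ η : ℝ} (hδ : 0 < δ) (hη : 0 < η) :
    ∀ᶠ n : ℕ in Filter.atTop, mass (iidTriple p n) (fun t =>
        ¬∀ k, |∑ i, φ k (zipTriple n t i) - n * ∑ s, p s * φ k s| ≤ n * δ) ≤ η := by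
  have := Fintype.ofFinite κ
  have hlim := tendsto_const_div_atTop_nhds_zero_nat
    ((∑ k, ∑ s, p s * (φ k s - ∑ s, p s * φ k s) ^ 2) / δ ^ 2)
  filter_upwards [hlim.eventually_le_const hη, Filter.eventually_gt_atTop 0] with n hn hn0
  have hn0' : (0 : ℝ) < n := Nat.cast_pos.2 hn0
  refine (mass_iidTriple_not_typical_le hp φ n (mul_pos hn0' hδ)).trans (le_of_eq_of_le ?_ hn)
  field_simp

theorem le_dropFst (hp : IsPmf p) (t : (A × B) × U) : p t ≤ dropFst p (t.1.2, t.2) :=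
  Finset.single_le_sum (f := fun a => p ((a, t.1.2), t.2)) (fun _ _ => hp.1 _)
    (Finset.mem_univ t.1.1)

theorem le_dropSnd (hp : IsPmf p) (t : (A × B) × U) : p t ≤ dropSnd p (t.1.1, t.2) :=
  Finset.single_le_sum (f := fun b => p ((t.1.1, b), t.2)) (fun _ _ => hp.1 _)
    (Finset.mem_univ t.1.2)

theorem sum_mul_comp_dropFst (p : (A × B) × U → ℝ) (φ : B × U → ℝ) :
    ∑ t, p t * φ (t.1.2, t.2) = ∑ s, dropFst p s * φ s := by
  simp only [Fintype.sum_prod_type, dropFst, Finset.sum_mul]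
  rw [Finset.sum_comm]
  exact Finset.sum_congr rfl fun b _ => Finset.sum_comm

theorem sum_mul_comp_dropSnd (p : (A × B) × U → ℝ) (φ : A × U → ℝ) :
    ∑ t, p t * φ (t.1.1, t.2) = ∑ s, dropSnd p s * φ s := by
  simp only [Fintype.sum_prod_type, dropSnd, Finset.sum_mul]
  exact Finset.sum_congr rfl fun a _ => Finset.sum_comm

theorem eventually_mass_iidTriple_not_density_le {κ : Type*} [Finite κ] (hp : IsPmf p)
    (φ : κ → (A × B) × U → ℝ) {δ η : ℝ} (hδ : 0 < δ) (hη : 0 < η) :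
    ∀ᶠ n : ℕ in Filter.atTop, mass (iidTriple p n) (fun t =>
      ¬((∀ k, ∑ i, φ k (zipTriple n t i) ≤ n * (∑ s, p s * φ k s + δ)) ∧
        DensityLE (iidTriple p n) (2 ^ (n * (MI p + δ))) t ∧
        DensityGE (dropFst (iidTriple p n)) (2 ^ (n * (MI (dropFst p) - δ))) (t.1.2, t.2) ∧
        DensityGE (dropSnd (iidTriple p n)) (2 ^ (n * (MI (dropSnd p) - δ))) (t.1.1, t.2))) ≤
      η := by
  set ψ : Fin 3 ⊕ κ → (A × B) × U → ℝ := Sum.elim ![logDensity p,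
    fun t => logDensity (dropFst p) (t.1.2, t.2), fun t => logDensity (dropSnd p) (t.1.1, t.2)] φ
  have hμ : ∑ t, p t * ψ (.inl 0) t = MI p := (MI_eq_sum_mul_logDensity hp).symm
  have hμ₁ : ∑ t, p t * ψ (.inl 1) t = MI (dropFst p) :=
    (sum_mul_comp_dropFst p _).trans (MI_eq_sum_mul_logDensity hp.dropFst).symm
  have hμ₂ : ∑ t, p t * ψ (.inl 2) t = MI (dropSnd p) :=
    (sum_mul_comp_dropSnd p _).trans (MI_eq_sum_mul_logDensity hp.dropSnd).symm
  filter_upwards [eventually_mass_iidTriple_not_typical_le hp ψ hδ hη] with n hn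
  refine (mass_mono (hp.iidTriple n).1 fun t ht hbad htyp => hbad ?_).trans hn
  have ht' : ∏ i, p (zipTriple n t i) ≠ 0 := ht.ne'
  have hpos (i) : 0 < p (zipTriple n t i) :=
    (hp.1 _).lt_of_ne' (Finset.prod_ne_zero_iff.1 ht' i (Finset.mem_univ i))
  have hle (l : Fin 3 ⊕ κ) {m : ℝ} (hm : ∑ s, p s * ψ l s = m) :
      ∑ i, ψ l (zipTriple n t i) ≤ n * (m + δ) := by
    linarith [hm ▸ (abs_le.1 (htyp l)).2]
  have hge (l : Fin 3 ⊕ κ) {m : ℝ} (hm : ∑ s, p s * ψ l s = m) :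
      n * (m - δ) ≤ ∑ i, ψ l (zipTriple n t i) := by
    linarith [hm ▸ (abs_le.1 (htyp l)).1]
  rw [dropFst_iidTriple, dropSnd_iidTriple]
  exact ⟨fun k => hle (.inr k) rfl, densityLE_iidTriple hp hpos (hle (.inl 0) hμ),
    densityGE_iid hp.dropFst (fun i => (hpos i).trans_le (le_dropFst hp _)) (hge (.inl 1) hμ₁),
    densityGE_iid hp.dropSnd (fun i => (hpos i).trans_le (le_dropSnd hp _)) (hge (.inl 2) hμ₂)⟩

end Triple

end Block

section Rates

theorem tendsto_two_rpow_nat_mul_atTop {δ : ℝ} (hδ : 0 < δ) :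
    Filter.Tendsto (fun n : ℕ => (2 : ℝ) ^ (n * δ)) Filter.atTop Filter.atTop :=
  (tendsto_rpow_atTop_of_base_gt_one 2 one_lt_two).comp
    (tendsto_natCast_atTop_atTop.atTop_mul_const hδ)

theorem ceil_two_rpow_le {a : ℝ} (ha : 0 ≤ a) : (⌈(2 : ℝ) ^ a⌉₊ : ℝ) ≤ 2 * 2 ^ a :=
  Nat.ceil_le_two_mul <| by linarith [Real.one_le_rpow one_le_two ha]

theorem eventually_logb_ceil_div_le {F δ ε : ℝ} (hF : 0 ≤ F) (hδ : 0 ≤ δ) (hδε : δ < ε) :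
    ∀ᶠ n : ℕ in Filter.atTop,
      Real.logb 2 (⌈(2 : ℝ) ^ (n * (F + δ))⌉₊ : ℕ) / n ≤ F + ε := by
  filter_upwards [tendsto_one_div_atTop_nhds_zero_nat.eventually_le_const (sub_pos.2 hδε),
    Filter.eventually_gt_atTop 0] with n hn hn0
  have : (0 : ℝ) < n := Nat.cast_pos.2 hn0
  have hceil := ceil_two_rpow_le (a := n * (F + δ)) (by positivity)
  calc
    _ ≤ Real.logb 2 (2 * 2 ^ (n * (F + δ))) / n := by
      gcongr
      exact one_lt_two
    _ = F + δ + 1 / n := by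
      rw [Real.logb_mul two_ne_zero (by positivity), Real.logb_self_eq_one one_lt_two,
        Real.logb_rpow two_pos one_lt_two.ne']
      field_simp
      exact add_comm _ _
    _ ≤ F + ε := by linarith

theorem eventually_exp_neg_ceil_div_le (I : ℝ) {δ η : ℝ} (hδ : 0 < δ) (hη : 0 < η) :
    ∀ᶠ n : ℕ in Filter.atTop,
      Real.exp (-(⌈(2 : ℝ) ^ (n * (I + 2 * δ))⌉₊ / 2 ^ (n * (I + δ)))) ≤ η := by
  have hlim := Real.tendsto_exp_neg_atTop_nhds_zero.comp (tendsto_two_rpow_nat_mul_atTop hδ)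
  filter_upwards [hlim.eventually_le_const hη] with n hn
  refine le_trans (Real.exp_le_exp.2 (neg_le_neg ?_)) hn
  rw [le_div_iff₀ (by positivity), ← Real.rpow_add two_pos]
  exact le_of_eq_of_le (by ring_nf) (Nat.le_ceil _)

theorem eventually_ceil_inv_mul_ceil_mul_le {I I₁ I₂ F δ η : ℝ} (hI : 0 ≤ I) (h₁ : I - I₁ ≤ F)
    (h₂ : I - I₂ ≤ F) (hδ : 0 < δ) (hη : 0 < η) :
    ∀ᶠ n : ℕ in Filter.atTop,
      (⌈(2 : ℝ) ^ (n * (F + 4 * δ))⌉₊ : ℝ)⁻¹ * (⌈(2 : ℝ) ^ (n * (I + 2 * δ))⌉₊ *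
        (((2 : ℝ) ^ (n * (I₁ - δ)))⁻¹ + ((2 : ℝ) ^ (n * (I₂ - δ)))⁻¹)) ≤ η := by
  have hlim := (tendsto_two_rpow_nat_mul_atTop hδ).inv_tendsto_atTop.const_mul (4 : ℝ)
  rw [mul_zero] at hlim
  filter_upwards [hlim.eventually_le_const hη] with n hn
  have hterm {J : ℝ} (hJ : I - J ≤ F) : ((2 : ℝ) ^ (n * (F + 4 * δ)))⁻¹ *
      ((2 : ℝ) ^ (n * (I + 2 * δ)) * ((2 : ℝ) ^ (n * (J - δ)))⁻¹) ≤ (2 ^ (n * δ))⁻¹ := by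
    simp only [← Real.rpow_neg two_pos.le, ← Real.rpow_add two_pos]
    refine Real.rpow_le_rpow_of_exponent_le one_le_two ?_
    nlinarith [mul_le_mul_of_nonneg_left hJ n.cast_nonneg]
  calc
    _ ≤ ((2 : ℝ) ^ (n * (F + 4 * δ)))⁻¹ * (2 * 2 ^ (n * (I + 2 * δ)) *
        (((2 : ℝ) ^ (n * (I₁ - δ)))⁻¹ + ((2 : ℝ) ^ (n * (I₂ - δ)))⁻¹)) := by
      gcongr
      exacts [Nat.le_ceil _, ceil_two_rpow_le (by positivity)]
    _ ≤ 4 * (2 ^ (n * δ))⁻¹ := by linarith [hterm h₁, hterm h₂]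
    _ ≤ η := hn

end Rates

section CodingTheorem

theorem exists_block_code {κ A B U : Type} [Finite κ] [Fintype A] [Fintype B] [Fintype U]
    {p : (A × B) × U → ℝ} (hp : IsPmf p) {F : ℝ} (hF : 0 ≤ F)
    (h₁ : MI p - MI (dropFst p) ≤ F) (h₂ : MI p - MI (dropSnd p) ≤ F)
    (φ : κ → (A × B) × U → ℝ) {ε : ℝ} (hε : 0 < ε) :
    ∃ (n m : ℕ) (f : (Fin n → A) × (Fin n → B) → Fin m) (g1 : Fin m × (Fin n → B) → Fin n → U)
      (g2 : Fin m × (Fin n → A) → Fin n → U),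
      0 < n ∧ Real.logb 2 m / n ≤ F + ε ∧
      mass (iid (margX p) n) (fun s =>
        ¬((∀ k, ∑ i, φ k ((s.1 i, s.2 i), g1 (f s, s.2) i) ≤ n * (∑ t, p t * φ k t + ε)) ∧
          g1 (f s, s.2) = g2 (f s, s.1))) ≤ ε := by
  have hδ : 0 < ε / 8 := by positivity
  have hη : 0 < ε / 3 := by positivity
  obtain ⟨n, hn0, hrate, htyp, hcover, hbin⟩ := ((Filter.eventually_gt_atTop 0).and <|
    (eventually_logb_ceil_div_le hF (δ := 4 * (ε / 8)) (ε := ε) (by positivity)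
      (by linarith)).and <|
    (eventually_mass_iidTriple_not_density_le hp φ hδ hη).and <|
    (eventually_exp_neg_ceil_div_le (MI p) hδ hη).and <|
    eventually_ceil_inv_mul_ceil_mul_le (MI_nonneg hp) h₁ h₂ hδ hη).exists
  obtain ⟨f, g1, g2, hcode⟩ := exists_code_of_density (hp.iidTriple n)
    (fun t => ∀ k, ∑ i, φ k (zipTriple n t i) ≤ n * (∑ s, p s * φ k s + ε / 8))
    (γ := 2 ^ (n * (MI p + ε / 8))) (γ1 := 2 ^ (n * (MI (dropFst p) - ε / 8)))
    (γ2 := 2 ^ (n * (MI (dropSnd p) - ε / 8))) (N := ⌈(2 : ℝ) ^ (n * (MI p + 2 * (ε / 8)))⌉₊)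
    (M := ⌈(2 : ℝ) ^ (n * (F + 4 * (ε / 8)))⌉₊) (by positivity) (by positivity) (by positivity)
    (Nat.ceil_pos.2 (by positivity)) (Nat.ceil_pos.2 (by positivity))
  rw [margX_iidTriple] at hcode
  refine ⟨n, _, f, g1, g2, hn0, hrate, ?_⟩
  calc
    _ ≤ _ := mass_mono (hp.margX.iid n).1 fun s _ hs h =>
      hs ⟨fun k => (h.1 k).trans (by gcongr; linarith), h.2⟩
    _ ≤ _ := hcode
    _ ≤ ε / 3 + ε / 3 + ε / 3 := add_le_add_three htyp hcover hbin
    _ = ε := by ring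

theorem IsPmf.sum_mul_average_le {S : Type} [Fintype S] {P : S → ℝ} (hP : IsPmf P) {n : ℕ}
    (hn : 0 < n) {d : S → Fin n → ℝ} {a K : ℝ} (hd : ∀ s i, d s i ≤ a + K) :
    ∑ s, P s * ((n : ℝ)⁻¹ * ∑ i, d s i) ≤ a + K * mass P fun s => ¬∑ i, d s i ≤ n * a := by
  have hn' : (0 : ℝ) < n := Nat.cast_pos.2 hn
  have hrow (s : S) : (n : ℝ)⁻¹ * ∑ i, d s i ≤ a + if ¬∑ i, d s i ≤ n * a then K else 0 := by
    rw [inv_mul_le_iff₀ hn']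
    split_ifs with h
    · simpa using h
    · simpa [mul_add] using Finset.sum_le_card_nsmul Finset.univ (d s) (a + K) fun i _ => hd s i
  calc
    _ ≤ ∑ s, P s * (a + if ¬∑ i, d s i ≤ n * a then K else 0) :=
      Finset.sum_le_sum fun s _ => mul_le_mul_of_nonneg_left (hrow s) (hP.1 s)
    _ = a + K * mass P fun s => ¬∑ i, d s i ≤ n * a := by
      simp only [mul_add, Finset.sum_add_distrib, ← Finset.sum_mul, hP.2, one_mul]
      simp only [mass_eq_sum_ite, mul_comm K, Finset.sum_mul, mul_ite, mul_zero, ite_mul, zero_mul]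

theorem exists_block_code_average {κ A B U : Type} [Finite κ] [Fintype A] [Fintype B] [Fintype U]
    {p : (A × B) × U → ℝ} (hp : IsPmf p) {F : ℝ} (hF : 0 ≤ F)
    (h₁ : MI p - MI (dropFst p) ≤ F) (h₂ : MI p - MI (dropSnd p) ≤ F)
    (φ : κ → (A × B) × U → ℝ) {ε : ℝ} (hε : 0 < ε) :
    ∃ (n m : ℕ) (f : (Fin n → A) × (Fin n → B) → Fin m) (g1 : Fin m × (Fin n → B) → Fin n → U)
      (g2 : Fin m × (Fin n → A) → Fin n → U),
      0 < n ∧ Real.logb 2 m / n ≤ F + ε ∧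
      (∀ k, ∑ s, iid (margX p) n s *
        ((n : ℝ)⁻¹ * ∑ i, φ k ((s.1 i, s.2 i), g1 (f s, s.2) i)) ≤ ∑ t, p t * φ k t + ε) ∧
      (∀ k, ∑ s, iid (margX p) n s *
        ((n : ℝ)⁻¹ * ∑ i, φ k ((s.1 i, s.2 i), g2 (f s, s.1) i)) ≤ ∑ t, p t * φ k t + ε) ∧
      mass (iid (margX p) n) (fun s => g1 (f s, s.2) ≠ g2 (f s, s.1)) ≤ ε := by
  obtain ⟨K, hK⟩ := (Set.finite_range fun kt : κ × ((A × B) × U) =>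
    φ kt.1 kt.2 - ∑ t, p t * φ kt.1 t).bddAbove
  have hφK (k t) : φ k t ≤ ∑ t, p t * φ k t + max K 0 := by
    linarith [hK (Set.mem_range_self (k, t)), le_max_left K 0]
  set η := ε / (1 + max K 0) with hη
  have hη0 : 0 < η := by positivity
  have hηε : η + max K 0 * η = ε := by
    rw [hη]
    field_simp
  have hle : η ≤ ε := by
    rw [← hηε]
    exact le_add_of_nonneg_right (by positivity)
  obtain ⟨n, m, f, g1, g2, hn, hrate, hbad⟩ := exists_block_code hp hF h₁ h₂ φ hη0
  have havg (g : (Fin n → A) × (Fin n → B) → Fin n → U) (k : κ)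
      (hg : mass (iid (margX p) n) (fun s => ¬∑ i, φ k ((s.1 i, s.2 i), g s i) ≤
        n * (∑ t, p t * φ k t + η)) ≤ η) :
      ∑ s, iid (margX p) n s * ((n : ℝ)⁻¹ * ∑ i, φ k ((s.1 i, s.2 i), g s i)) ≤
        ∑ t, p t * φ k t + ε := calc
    _ ≤ ∑ t, p t * φ k t + η + max K 0 * _ := (hp.margX.iid n).sum_mul_average_le hn
      fun _ _ => (hφK k _).trans (by linarith)
    _ ≤ ∑ t, p t * φ k t + η + max K 0 * η := by gcongr
    _ = ∑ t, p t * φ k t + ε := by rw [add_assoc, hηε]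
  refine ⟨n, m, f, g1, g2, hn, hrate.trans (by gcongr), fun k => havg _ k ?_,
    fun k => havg _ k ?_, ?_⟩
  · exact hbad.trans' (mass_mono (hp.margX.iid n).1 fun s _ hs h => hs (h.1 k))
  · exact hbad.trans' (mass_mono (hp.margX.iid n).1 fun s _ hs h => hs (h.2 ▸ h.1 k))
  · exact (hbad.trans hle).trans' (mass_mono (hp.margX.iid n).1 fun s _ hs h => hs h.2)

end CodingTheorem

section CommonReconstruction

/-- The joint law of a source `q` and the output of the channel `W`. -/
def joint {S U : Type} (q : S → ℝ) (W : S → U → ℝ) (t : S × U) : ℝ :=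
  q t.1 * W t.1 t.2

theorem IsPmf.joint {S U : Type} [Fintype S] [Fintype U] {q : S → ℝ} (hq : IsPmf q)
    {W : S → U → ℝ} (hW : IsCondPmf W) : IsPmf (joint q W) := by
  refine ⟨fun t => mul_nonneg (hq.1 _) ((hW _).1 _), ?_⟩
  simp only [Fintype.sum_prod_type, TWR.joint, ← Finset.mul_sum, (hW _).2, mul_one, hq.2]

theorem sum_joint {S U : Type} [Fintype U] {q : S → ℝ} {W : S → U → ℝ} (hW : IsCondPmf W)
    (s : S) : ∑ u, joint q W (s, u) = q s := by
  simp only [joint, ← Finset.mul_sum, (hW s).2, mul_one]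

variable {𝒳 𝒴 Xh Yh : Type} [Fintype 𝒳] [Fintype 𝒴] [Fintype Xh] [Fintype Yh]

theorem crAchievable_of_MI_le {q : 𝒳 × 𝒴 → ℝ} (hq : IsPmf q) {W : 𝒳 × 𝒴 → Xh × Yh → ℝ}
    (hW : IsCondPmf W) {F : ℝ} (hF : 0 ≤ F) (h₁ : MI (joint q W) - MI (dropFst (joint q W)) ≤ F)
    (h₂ : MI (joint q W) - MI (dropSnd (joint q W)) ≤ F) (δ1 : 𝒳 → Xh → ℝ) (δ2 : 𝒴 → Yh → ℝ) :
    CRAchievable q δ1 δ2 (∑ t, joint q W t * δ1 t.1.1 t.2.1) (∑ t, joint q W t * δ2 t.1.2 t.2.2)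
      F := by
  intro ε hε
  obtain ⟨n, m, f, g1, g2, hn, hrate, hdist1, hdist2, herr⟩ := exists_block_code_average (κ := Bool)
    (hq.joint hW) hF h₁ h₂ (fun k t => bif k then δ1 t.1.1 t.2.1 else δ2 t.1.2 t.2.2) hε
  have hmarg : margX (joint q W) = q := funext (sum_joint hW)
  rw [hmarg] at hdist1 hdist2 herr
  refine ⟨n, m, f, fun a i => (g1 a i).1, fun a i => (g2 a i).2, fun a i => (g1 a i).2,
    fun a i => (g2 a i).1, hn, hrate, hdist1 true, hdist2 false, ?_, ?_⟩
  all_goals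
    rw [mass_eq_sum_ite] at herr
    refine le_trans (Finset.sum_le_sum fun s _ => ?_) herr
    split_ifs <;> simp_all [(hq.iid n).1]

theorem nonneg_of_mem_crFormulaSet {q : 𝒳 × 𝒴 → ℝ} (hq : IsPmf q) {δ1 : 𝒳 → Xh → ℝ}
    {δ2 : 𝒴 → Yh → ℝ} {d1 d2 F : ℝ} (hF : F ∈ crFormulaSet q δ1 δ2 d1 d2) : 0 ≤ F := by
  obtain ⟨W, hW, -, -, rfl⟩ := hF
  exact le_max_of_le_left
    (condMI_nonneg ((hq.joint hW).comp_equiv (Equiv.prodAssoc 𝒳 𝒴 (Xh × Yh)).symm))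

theorem crAchievable_of_mem_crFormulaSet {q : 𝒳 × 𝒴 → ℝ} (hq : IsPmf q) {δ1 : 𝒳 → Xh → ℝ}
    {δ2 : 𝒴 → Yh → ℝ} {d1 d2 F : ℝ} (hF : F ∈ crFormulaSet q δ1 δ2 d1 d2) :
    CRAchievable q δ1 δ2 d1 d2 F := by
  have h0 := nonneg_of_mem_crFormulaSet hq hF
  obtain ⟨W, hW, hd1, hd2, rfl⟩ := hF
  have h₁ := condMI_eq_MI_sub_MI_dropFst (joint q W)
  have h₂ := condMI_eq_MI_sub_MI_dropSnd (joint q W)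
  intro ε hε
  obtain ⟨n, m, f, g1, g2, φ1, φ2, hn, hrate, hD1, hD2, herr⟩ := crAchievable_of_MI_le hq hW
    h0 (h₁.ge.trans (le_max_left _ _)) (h₂.ge.trans (le_max_right _ _)) δ1 δ2 ε hε
  simp only [joint, Fintype.sum_prod_type (α₁ := 𝒳 × 𝒴), Fintype.sum_prod_type (α₁ := 𝒳)] at hD1 hD2
  exact ⟨n, m, f, g1, g2, φ1, φ2, hn, hrate, hD1.trans (by linarith), hD2.trans (by linarith), herr⟩

end CommonReconstruction

section SymmChannel

variable {α : Type} [Fintype α]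

variable (α) in
/-- The Hamming distortion of the symmetric channel with transition probability `e`. -/
def symmDist (e : ℝ) : ℝ :=
  (Fintype.card α - 1) * e

/-- The symmetric channel: every letter is turned into each other letter with probability `e`. -/
def symmChannel (e : ℝ) (a b : α) : ℝ :=
  if a = b then 1 - symmDist α e else e

variable (α) in
/-- The average log-likelihood of the symmetric channel along pairs of Hamming distortion `D`. -/
def symmLogLik (e D : ℝ) : ℝ :=
  (1 - D) * Real.logb 2 (1 - symmDist α e) + D * Real.logb 2 e

variable (α) in
/-- The conditional entropy of the symmetric channel. -/
def symmEntropy (e : ℝ) : ℝ :=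
  -symmLogLik α e (symmDist α e)

theorem symmDist_add (e : ℝ) : symmDist α e + e = Fintype.card α * e := by
  rw [symmDist]
  ring

theorem symmChannel_eq (e : ℝ) (a b : α) :
    symmChannel e a b = e + if a = b then 1 - Fintype.card α * e else 0 := by
  rw [symmChannel, ← symmDist_add]
  split_ifs <;> ring

theorem sum_mul_symmChannel (e : ℝ) (w : α → ℝ) (a : α) :
    ∑ b, w b * symmChannel e a b = e * ∑ b, w b + (1 - Fintype.card α * e) * w a := by
  simp [symmChannel_eq, mul_add, Finset.sum_add_distrib, Finset.mul_sum, mul_comm]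

theorem sum_symmChannel (e : ℝ) (b : α) : ∑ a, symmChannel e a b = 1 := by
  simp [symmChannel_eq, Finset.sum_add_distrib]

theorem symmChannel_pos {e : ℝ} (he : 0 < e) (hk : Fintype.card α * e < 1) (a b : α) :
    0 < symmChannel e a b := by
  rw [symmChannel]
  split_ifs
  · linarith [symmDist_add (α := α) e]
  · exact he

theorem isPmf_symmChannel {e : ℝ} (he : 0 ≤ e) (hk : Fintype.card α * e < 1) (b : α) :
    IsPmf fun a => symmChannel e a b := by
  refine ⟨fun a => show 0 ≤ symmChannel e a b from ?_, sum_symmChannel e b⟩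
  rw [symmChannel]
  split_ifs
  · linarith [symmDist_add (α := α) e]
  · exact he

theorem logb_symmChannel (e : ℝ) (a b : α) :
    Real.logb 2 (symmChannel e a b) = symmLogLik α e (dHam a b) := by
  rw [symmChannel, symmLogLik, dHam]
  split_ifs <;> ring

theorem symmLogLik_eq (e D : ℝ) : symmLogLik α e D = Real.logb 2 (1 - symmDist α e) +
    D * (Real.logb 2 e - Real.logb 2 (1 - symmDist α e)) := by
  rw [symmLogLik]
  ring

theorem sum_mul_symmLogLik {S : Type*} [Fintype S] {P : S → ℝ} (hP : ∑ s, P s = 1) (e : ℝ)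
    (D : S → ℝ) :
    ∑ s, P s * symmLogLik α e (D s) = symmLogLik α e (∑ s, P s * D s) := by
  simp only [symmLogLik_eq, mul_add, Finset.sum_add_distrib, ← mul_assoc, ← Finset.sum_mul, hP,
    one_mul]

theorem symmLogLik_anti {e : ℝ} (he : 0 < e) (hk : Fintype.card α * e < 1) {D D' : ℝ}
    (hD : D ≤ D') : symmLogLik α e D' ≤ symmLogLik α e D := by
  have hlog : Real.logb 2 e ≤ Real.logb 2 (1 - symmDist α e) :=
    Real.logb_le_logb_of_le one_lt_two he (by linarith [symmDist_add (α := α) e])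
  rw [symmLogLik_eq, symmLogLik_eq]
  exact add_le_add_right (mul_le_mul_of_nonpos_right hD (sub_nonpos.2 hlog)) _

theorem sum_symmChannel_mul_dHam (e : ℝ) (b : α) :
    ∑ a, symmChannel e a b * dHam a b = symmDist α e := by
  have h (a : α) : symmChannel e a b * dHam a b = symmChannel e a b -
      if a = b then 1 - symmDist α e else 0 := by
    rw [symmChannel, dHam]
    split_ifs <;> ring
  simp [h, sum_symmChannel]

theorem H2_symmChannel (e : ℝ) (b : α) : H2 (fun a => symmChannel e a b) = symmEntropy α e := by
  simp only [H2, logb_symmChannel, sum_mul_symmLogLik (sum_symmChannel e b),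
    sum_symmChannel_mul_dHam, symmEntropy]

theorem tendsto_symmLogLik_zero : Filter.Tendsto (fun e => symmLogLik α e 0)
    (nhdsWithin 0 (Set.Ioi 0)) (nhds (symmLogLik α 0 0)) := by
  have hcont : ContinuousAt (fun e => Real.logb 2 (1 - symmDist α e)) 0 := by
    unfold symmDist
    fun_prop (disch := simp)
  simpa [symmLogLik, symmDist] using hcont.tendsto.mono_left nhdsWithin_le_nhds

/-- At `e = 0` the likelihood may vanish, so the optimal exponent is only reached in the limit. -/
theorem neg_symmEntropy_le {e c : ℝ} (he : 0 ≤ e) (hk : Fintype.card α * e < 1)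
    (h : ∀ e' : ℝ, 0 < e' → Fintype.card α * e' < 1 → symmLogLik α e' (symmDist α e) ≤ c) :
    -symmEntropy α e ≤ c := by
  rw [symmEntropy, neg_neg]
  obtain rfl | he := he.eq_or_lt
  · have hlog := tendsto_symmLogLik_zero (α := α)
    have hcard : Filter.Tendsto (fun e' : ℝ => Fintype.card α * e')
        (nhdsWithin 0 (Set.Ioi 0)) (nhds (Fintype.card α * 0)) :=
      (Filter.tendsto_id.const_mul _).mono_left nhdsWithin_le_nhds
    have h0 : symmDist α 0 = 0 := mul_zero _
    rw [h0] at h ⊢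
    refine le_of_tendsto hlog ?_
    filter_upwards [hcard.eventually_lt_const hk, self_mem_nhdsWithin] with e' hk' he'
    exact h e' he' hk'
  · exact h e he hk

end SymmChannel

section Converse

variable {𝒳 𝒴 Xh Yh : Type} [Fintype 𝒳] [Fintype 𝒴]

variable (𝒳) in
/-- The transition probability at which the symmetric channel has Hamming distortion `d`; it is
`0` (by division by zero) when there is only one letter. -/
def crossover (d : ℝ) : ℝ :=
  d / (Fintype.card 𝒳 - 1)

/-- `H(X|Y)` minus the entropy of symmetric noise of Hamming distortion `d`: the value of
`R_{X|Y}(d)` for small `d`. -/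
def hammingRD (q : 𝒳 × 𝒴 → ℝ) (d : ℝ) : ℝ :=
  condH q - symmEntropy 𝒳 (crossover 𝒳 d)

theorem crossover_nonneg [Nonempty 𝒳] {d : ℝ} (hd : 0 ≤ d) : 0 ≤ crossover 𝒳 d :=
  div_nonneg hd (sub_nonneg.2 (Nat.one_le_cast.2 Fintype.card_pos))

theorem symmDist_crossover [Nontrivial 𝒳] (d : ℝ) : symmDist 𝒳 (crossover 𝒳 d) = d :=
  mul_div_cancel₀ _ (sub_pos.2 (Nat.one_lt_cast.2 Fintype.one_lt_card)).ne'

theorem symmDist_crossover_of_subsingleton [Subsingleton 𝒳] [Nonempty 𝒳] (d : ℝ) :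
    symmDist 𝒳 (crossover 𝒳 d) = 0 := by
  obtain ⟨_⟩ := nonempty_unique 𝒳
  simp [symmDist]

theorem dHam_eq_zero {α : Type} [Subsingleton α] (a b : α) : dHam a b = 0 :=
  if_pos (Subsingleton.elim a b)

theorem condH_le_logb_card_sub {A B : Type} [Fintype A] [Fintype B] {P : A × B → ℝ}
    (hP : IsPmf P) {m : ℕ} (f : A × B → Fin m) {V : Fin m × B → A → ℝ} (hV : ∀ s, IsPmf (V s))
    (hpos : ∀ t, 0 < P t → 0 < V (f t, t.2) t.1) :
    condH P ≤ Real.logb 2 m - ∑ t, P t * Real.logb 2 (V (f t, t.2) t.1) := by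
  obtain ⟨t₀, -, -⟩ := Finset.exists_ne_zero_of_sum_ne_zero (hP.2.trans_ne one_ne_zero)
  have hm : (0 : ℝ) < m := Nat.cast_pos.2 (f t₀).pos
  have hsub (b : B) : ∑ a, (m : ℝ)⁻¹ * V (f (a, b), b) a ≤ 1 := by
    rw [← Finset.mul_sum, inv_mul_le_iff₀ hm, mul_one]
    calc
      _ ≤ ∑ a, ∑ j, V (j, b) a := Finset.sum_le_sum fun a _ =>
        Finset.single_le_sum (f := fun j => V (j, b) a) (fun j _ => (hV _).1 a)
          (Finset.mem_univ _)
      _ = m := by simp [Finset.sum_comm (γ := A), (hV _).2]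
  refine (condH_le_crossEntropy (V := fun t => (m : ℝ)⁻¹ * V (f t, t.2) t.1) hP
    (fun t => mul_nonneg (inv_nonneg.2 hm.le) ((hV _).1 _)) hsub
    fun t ht => mul_pos (inv_pos.2 hm) (hpos t ht)).trans_eq ?_
  have hlog (t) : P t * Real.logb 2 ((m : ℝ)⁻¹ * V (f t, t.2) t.1) =
      P t * Real.logb 2 (V (f t, t.2) t.1) - P t * Real.logb 2 m := by
    obtain ht | ht := (hP.1 t).eq_or_lt
    · simp [← ht]
    · rw [Real.logb_mul (inv_pos.2 hm).ne' (hpos t ht).ne', Real.logb_inv]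
      ring
  simp only [hlog, Finset.sum_sub_distrib, ← Finset.sum_mul, hP.2]
  ring

theorem condH_add_symmLogLik_Delta1_le {q : 𝒳 × 𝒴 → ℝ} (hq : IsPmf q) {n m : ℕ} (hn : 0 < n)
    (f : (Fin n → 𝒳) × (Fin n → 𝒴) → Fin m) (g1 : Fin m × (Fin n → 𝒴) → Fin n → 𝒳) {e : ℝ}
    (he : 0 < e) (hk : Fintype.card 𝒳 * e < 1) :
    condH q + symmLogLik 𝒳 e (Delta1 q dHam f g1) ≤ Real.logb 2 m / n := by
  have hn' : (0 : ℝ) < n := Nat.cast_pos.2 hn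
  set V : Fin m × (Fin n → 𝒴) → (Fin n → 𝒳) → ℝ := fun s a => ∏ i, symmChannel e (a i) (g1 s i)
  have hpos (s a) : 0 < V s a := Finset.prod_pos fun i _ => symmChannel_pos he hk _ _
  have hV (s) : IsPmf (V s) := by
    refine ⟨fun a => (hpos s a).le, ?_⟩
    refine (Fintype.prod_sum fun i a => symmChannel e a (g1 s i)).symm.trans ?_
    exact Finset.prod_eq_one fun i _ => sum_symmChannel e (g1 s i)
  have hlog (s a) : Real.logb 2 (V s a) =
      n * symmLogLik 𝒳 e ((n : ℝ)⁻¹ * ∑ i, dHam (a i) (g1 s i)) := by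
    rw [Real.logb_prod _ _ fun i _ => (symmChannel_pos he hk _ _).ne', Finset.mul_sum,
      ← sum_mul_symmLogLik (by simp [hn'.ne']), ← Finset.mul_sum, mul_inv_cancel_left₀ hn'.ne']
    simp only [logb_symmChannel]
  have h := condH_le_logb_card_sub (hq.iid n) f hV fun t _ => hpos _ _
  simp only [hlog, mul_left_comm _ (n : ℝ), ← Finset.mul_sum] at h
  rw [sum_mul_symmLogLik (hq.iid n).2, condH_iid hq] at h
  rw [le_div_iff₀' hn', mul_add]
  exact le_sub_iff_add_le.1 h

theorem le_symmDist_crossover_add [Nonempty 𝒳] {D d ε : ℝ} (hε : 0 ≤ ε) (hD : D ≤ d + ε)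
    (h0 : Subsingleton 𝒳 → D ≤ 0) : D ≤ symmDist 𝒳 (crossover 𝒳 d) + ε := by
  obtain h | h := subsingleton_or_nontrivial 𝒳
  · exact (h0 h).trans (by simpa [symmDist_crossover_of_subsingleton])
  · rwa [symmDist_crossover]

theorem hammingRD_le_of_rdAchievable {q : 𝒳 × 𝒴 → ℝ} (hq : IsPmf q) [Nonempty 𝒳]
    {δ2 : 𝒴 → Yh → ℝ} {d1 d2 r : ℝ} (hd : 0 ≤ d1) (hk : Fintype.card 𝒳 * crossover 𝒳 d1 < 1)
    (hr : RDAchievable q dHam δ2 d1 d2 r) : hammingRD q d1 ≤ r := by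
  have hcode (e : ℝ) (he : 0 < e) (hke : Fintype.card 𝒳 * e < 1) (ε : ℝ) (hε : 0 < ε) :
      symmLogLik 𝒳 e (symmDist 𝒳 (crossover 𝒳 d1) + ε) - ε ≤ r - condH q := by
    obtain ⟨n, m, f, g1, -, hn, hrate, hD, -⟩ := hr ε hε
    have hD' := le_symmDist_crossover_add hε.le hD
      fun (_ : Subsingleton 𝒳) => by simp [Delta1, dHam_eq_zero]
    linarith [condH_add_symmLogLik_Delta1_le hq hn f g1 he hke, symmLogLik_anti he hke hD']
  have hlim (e : ℝ) : Continuous fun ε =>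
      symmLogLik 𝒳 e (symmDist 𝒳 (crossover 𝒳 d1) + ε) - ε := by
    unfold symmLogLik
    fun_prop
  have h := neg_symmEntropy_le (crossover_nonneg hd) hk fun e he hke => by
    simpa using le_of_tendsto (x := nhdsWithin 0 (Set.Ioi 0))
      ((hlim e).tendsto 0 |>.mono_left nhdsWithin_le_nhds)
      (eventually_mem_nhdsWithin.mono (hcode e he hke))
  rw [hammingRD]
  linarith

theorem hammingRD_le_condMI {q : 𝒳 × 𝒴 → ℝ} (hq : IsPmf q) [Nonempty 𝒳] {d : ℝ} (hd : 0 ≤ d)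
    (hk : Fintype.card 𝒳 * crossover 𝒳 d < 1) {W : 𝒳 × 𝒴 → 𝒳 → ℝ} (hW : IsCondPmf W)
    (hD : ∑ x, ∑ y, ∑ xh, q (x, y) * W (x, y) xh * dHam x xh ≤ d) :
    hammingRD q d ≤ condMI fun t : 𝒳 × 𝒴 × 𝒳 => q (t.1, t.2.1) * W (t.1, t.2.1) t.2.2 := by
  set p : 𝒳 × 𝒴 × 𝒳 → ℝ := fun t => q (t.1, t.2.1) * W (t.1, t.2.1) t.2.2
  have hp : IsPmf p := (hq.joint hW).comp_equiv (Equiv.prodAssoc 𝒳 𝒴 𝒳).symm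
  have hmarg : (fun s : 𝒳 × 𝒴 => ∑ xh, p (s.1, s.2, xh)) = q := funext (sum_joint hW)
  have hdist : ∑ t, p t * dHam t.1 t.2.2 ≤ symmDist 𝒳 (crossover 𝒳 d) := by
    rw [← add_zero (symmDist _ _)]
    refine le_symmDist_crossover_add le_rfl ?_ fun _ => by simp [dHam_eq_zero]
    simpa [Fintype.sum_prod_type, p] using hD
  have h := neg_symmEntropy_le (crossover_nonneg hd) hk (c := condMI p - condH q)
    fun e he hke => by
    have hT := condH_le_crossEntropy (V := fun t => symmChannel e t.1 t.2.2) hp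
      (fun _ => (symmChannel_pos he hke _ _).le) (fun b => (sum_symmChannel e b.2).le)
      fun _ _ => symmChannel_pos he hke _ _
    simp only [logb_symmChannel, sum_mul_symmLogLik hp.2] at hT
    rw [condMI_eq_condH_sub_condH, hmarg]
    linarith [symmLogLik_anti he hke hdist]
  rw [hammingRD]
  linarith

end Converse

section BackwardSource

variable {α β : Type} [Fintype α]

/-- The law on `α × β` which becomes `r` when its first component passes through the symmetric
channel `symmChannel e`; its values may be negative. -/
def backwardSource (e : ℝ) (r : α × β → ℝ) (t : α × β) : ℝ :=
  (r t - e * margY r t.2) / (1 - Fintype.card α * e)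

theorem margY_backwardSource {e : ℝ} (hk : Fintype.card α * e < 1) (r : α × β → ℝ) :
    margY (backwardSource e r) = margY r := by
  funext b
  rw [margY]
  simp only [backwardSource]
  rw [← Finset.sum_div, div_eq_iff (sub_pos.2 hk).ne', Finset.sum_sub_distrib, Finset.sum_const,
    Finset.card_univ, nsmul_eq_mul, ← margY]
  ring

theorem sum_backwardSource_mul_symmChannel {e : ℝ} (hk : Fintype.card α * e < 1) (r : α × β → ℝ)
    (a : α) (b : β) : ∑ c, backwardSource e r (c, b) * symmChannel e a c = r (a, b) := by
  have hmarg : ∑ c, backwardSource e r (c, b) = margY r b := congrFun (margY_backwardSource hk r) b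
  rw [sum_mul_symmChannel, hmarg, backwardSource, mul_div_cancel₀ _ (sub_pos.2 hk).ne']
  ring

variable [Fintype β]

theorem margY_le_one {r : α × β → ℝ} (hr : IsPmf r) (b : β) : margY r b ≤ 1 :=
  (Finset.single_le_sum (fun b _ => hr.margY.1 b) (Finset.mem_univ b)).trans_eq hr.margY.2

theorem card_mul_lt_one [Nonempty α] [Nonempty β] {r : α × β → ℝ} (hr : IsPmf r) {e : ℝ}
    (h : ∀ t, e < r t) : Fintype.card α * e < 1 := by
  obtain ⟨b⟩ := ‹Nonempty β›
  refine lt_of_lt_of_le ?_ (margY_le_one hr b)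
  rw [← nsmul_eq_mul, ← Finset.card_univ, ← Finset.sum_const]
  exact Finset.sum_lt_sum_of_nonempty Finset.univ_nonempty fun a _ => h (a, b)

theorem sub_le_backwardSource {r : α × β → ℝ} (hr : IsPmf r) {e : ℝ} (he : 0 ≤ e)
    (hk : Fintype.card α * e < 1) {t : α × β} (ht : e ≤ r t) : r t - e ≤ backwardSource e r t := by
  have hmarg : e * margY r t.2 ≤ e := mul_le_of_le_one_right he (margY_le_one hr t.2)
  rw [backwardSource, le_div_iff₀ (sub_pos.2 hk)]
  have : (r t - e) * (Fintype.card α * e) ≥ 0 := by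
    have := sub_nonneg.2 ht
    positivity
  linarith

theorem IsPmf.backwardSource {r : α × β → ℝ} (hr : IsPmf r) {e : ℝ} (he : 0 ≤ e)
    (hk : Fintype.card α * e < 1) (h : ∀ t, e ≤ r t) : IsPmf (backwardSource e r) := by
  refine ⟨fun t => (sub_nonneg.2 (h t)).trans (sub_le_backwardSource hr he hk (h t)), ?_⟩
  rw [Fintype.sum_prod_type_right]
  exact (congrArg (fun w => ∑ b, w b) (margY_backwardSource hk r)).trans hr.margY.2

end BackwardSource

section Achievability

theorem exists_isCondPmf_joint_eq {S U : Type} [Fintype U] {p : S × U → ℝ} (hp : ∀ t, 0 ≤ p t)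
    {q : S → ℝ} (hq : ∀ s, 0 < q s) (hpq : ∀ s, ∑ u, p (s, u) = q s) :
    ∃ W : S → U → ℝ, IsCondPmf W ∧ joint q W = p := by
  refine ⟨fun s u => p (s, u) / q s, fun s => ⟨fun u => div_nonneg (hp _) (hq s).le, ?_⟩,
    funext fun t => mul_div_cancel₀ _ (hq t.1).ne'⟩
  rw [← Finset.sum_div, hpq, div_self (hq s).ne']

theorem condH_eq_of_H2_eq {A C : Type} [Fintype A] [Fintype C] {r : C → ℝ} (hr : IsPmf r)
    {T : C → A → ℝ} (hT : IsCondPmf T) {h : ℝ} (hH : ∀ c, H2 (T c) = h) :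
    condH (fun t : A × C => r t.2 * T t.2 t.1) = h := by
  have hp : IsPmf fun t : A × C => r t.2 * T t.2 t.1 :=
    (hr.joint hT).comp_equiv (Equiv.prodComm A C)
  have hmarg : margY (fun t : A × C => r t.2 * T t.2 t.1) = r := funext (sum_joint hT)
  have hlog (c : C) (a : A) : r c * T c a * Real.logb 2 (r c * T c a / r c) =
      r c * (T c a * Real.logb 2 (T c a)) := by
    obtain hc | hc := eq_or_ne (r c) 0
    · simp [hc]
    · rw [mul_div_cancel_left₀ _ hc, mul_assoc]
  rw [condH_eq_crossEntropy hp, hmarg, Fintype.sum_prod_type_right]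
  simp only [hlog, ← Finset.mul_sum]
  have hsum (c : C) : ∑ a, T c a * Real.logb 2 (T c a) = -h := by rw [← hH c, H2, neg_neg]
  simp only [hsum, ← Finset.sum_mul, hr.2]
  ring

variable {𝒳 𝒴 U : Type} [Fintype 𝒳] [Fintype 𝒴] [Fintype U]

theorem condMI_eq_hammingRD [Nonempty 𝒳] {d : ℝ} (hd : 0 ≤ d)
    (hk : Fintype.card 𝒳 * crossover 𝒳 d < 1) {r : 𝒴 × U → ℝ} (hr : IsPmf r) (φ : U → 𝒳)
    {p : 𝒳 × 𝒴 × U → ℝ} (hp : ∀ t, p t = r t.2 * symmChannel (crossover 𝒳 d) t.1 (φ t.2.2)) :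
    condMI p = hammingRD (fun s : 𝒳 × 𝒴 => ∑ u, p (s.1, s.2, u)) d := by
  rw [condMI_eq_condH_sub_condH, hammingRD]
  congr 1
  rw [funext hp]
  exact condH_eq_of_H2_eq hr
    (T := fun c x => symmChannel (crossover 𝒳 d) x (φ c.2))
    (fun c => isPmf_symmChannel (crossover_nonneg hd) hk (φ c.2))
    fun c => H2_symmChannel _ (φ c.2)

theorem sum_mul_dHam_le [Nonempty 𝒳] {d : ℝ} (hd : 0 ≤ d) {r : 𝒴 × U → ℝ} (hr : IsPmf r)
    (φ : U → 𝒳) {p : 𝒳 × 𝒴 × U → ℝ}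
    (hp : ∀ t, p t = r t.2 * symmChannel (crossover 𝒳 d) t.1 (φ t.2.2)) :
    ∑ t, p t * dHam t.1 (φ t.2.2) ≤ d := by
  simp only [hp]
  rw [Fintype.sum_prod_type_right]
  simp only [mul_assoc, ← Finset.mul_sum, sum_symmChannel_mul_dHam, ← Finset.sum_mul, hr.2,
    one_mul]
  obtain h | h := subsingleton_or_nontrivial 𝒳
  · rwa [symmDist_crossover_of_subsingleton]
  · rw [symmDist_crossover]

theorem condRD_dHam_eq_hammingRD [Nonempty 𝒳] [Nonempty 𝒴] {q : 𝒳 × 𝒴 → ℝ} (hq : IsPmf q) {d : ℝ}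
    (hd : 0 ≤ d) (h : ∀ t, crossover 𝒳 d < q t) : condRD q dHam d = hammingRD q d := by
  have he := crossover_nonneg (𝒳 := 𝒳) hd
  have hk := card_mul_lt_one hq h
  refine IsLeast.csInf_eq ⟨?_, ?_⟩
  · have hr := hq.backwardSource he hk fun t => (h t).le
    obtain ⟨W, hW, hjoint⟩ := exists_isCondPmf_joint_eq
      (p := fun t : (𝒳 × 𝒴) × 𝒳 => backwardSource (crossover 𝒳 d) q (t.2, t.1.2) *
        symmChannel (crossover 𝒳 d) t.1.1 t.2)
      (fun t => mul_nonneg (hr.1 _) ((isPmf_symmChannel he hk t.2).1 t.1.1))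
      (fun t => he.trans_lt (h t)) (fun t => sum_backwardSource_mul_symmChannel hk q t.1 t.2)
    have hp (t : 𝒳 × 𝒴 × 𝒳) := congrFun hjoint ((t.1, t.2.1), t.2.2)
    have hr' := hr.comp_equiv (Equiv.prodComm 𝒴 𝒳)
    refine ⟨W, hW, ?_, ?_⟩
    · simpa only [Fintype.sum_prod_type] using! sum_mul_dHam_le hd hr' id hp
    · exact ((condMI_eq_hammingRD hd hk hr' id hp).trans
        (congrArg (hammingRD · d) (funext (sum_joint hW)))).symm
  · rintro _ ⟨W, hW, hD, rfl⟩
    exact hammingRD_le_condMI hq hd hk hW hD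

/-- The law on `𝒳 × 𝒴` which becomes `q` when its components pass through independent symmetric
channels with transition probabilities `e1` and `e2`; its values may be negative. -/
def backwardSource₂ (e1 e2 : ℝ) (q : 𝒳 × 𝒴 → ℝ) : 𝒳 × 𝒴 → ℝ :=
  swap (backwardSource e2 (swap (backwardSource e1 q)))

theorem sum_backwardSource₂_mul_symmChannel {e1 e2 : ℝ} (hk1 : Fintype.card 𝒳 * e1 < 1)
    (hk2 : Fintype.card 𝒴 * e2 < 1) (q : 𝒳 × 𝒴 → ℝ) (s : 𝒳 × 𝒴) :
    ∑ u, backwardSource₂ e1 e2 q u * symmChannel e2 s.2 u.2 * symmChannel e1 s.1 u.1 = q s := by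
  have hY (x : 𝒳) (y : 𝒴) : ∑ b, backwardSource₂ e1 e2 q (x, b) * symmChannel e2 y b =
      backwardSource e1 q (x, y) :=
    sum_backwardSource_mul_symmChannel hk2 (swap (backwardSource e1 q)) y x
  simp only [Fintype.sum_prod_type, ← Finset.sum_mul, hY,
    sum_backwardSource_mul_symmChannel hk1]

theorem IsPmf.swap {q : 𝒳 × 𝒴 → ℝ} (hq : IsPmf q) : IsPmf (swap q) :=
  hq.comp_equiv (Equiv.prodComm 𝒴 𝒳)

theorem IsPmf.backwardSource₂ {q : 𝒳 × 𝒴 → ℝ} (hq : IsPmf q) {e1 e2 : ℝ} (he1 : 0 ≤ e1)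
    (he2 : 0 ≤ e2) (hk1 : Fintype.card 𝒳 * e1 < 1) (hk2 : Fintype.card 𝒴 * e2 < 1)
    (h : ∀ t, e1 + e2 ≤ q t) : IsPmf (backwardSource₂ e1 e2 q) := by
  have h1 (t) : e1 ≤ q t := by linarith [h t]
  refine ((hq.backwardSource he1 hk1 h1).swap.backwardSource he2 hk2 fun t => ?_).swap
  exact (le_sub_iff_add_le'.2 (h _)).trans (sub_le_backwardSource hq he1 hk1 (h1 _))

theorem IsPmf.mul_symmChannel {α C : Type} [Fintype α] [Fintype C] {r : C → ℝ} (hr : IsPmf r)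
    {e : ℝ} (he : 0 ≤ e) (hk : Fintype.card α * e < 1) (φ : C → α) :
    IsPmf fun t : α × C => r t.2 * symmChannel e t.1 (φ t.2) :=
  (hr.joint fun c => isPmf_symmChannel he hk (φ c)).comp_equiv (Equiv.prodComm α C)

theorem max_hammingRD_mem_crFormulaSet [Nonempty 𝒳] [Nonempty 𝒴] {q : 𝒳 × 𝒴 → ℝ} (hq : IsPmf q)
    {d1 d2 : ℝ} (hd1 : 0 ≤ d1) (hd2 : 0 ≤ d2) (h : ∀ t, crossover 𝒳 d1 + crossover 𝒴 d2 < q t) :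
    max (hammingRD q d1) (hammingRD (swap q) d2) ∈ crFormulaSet q dHam dHam d1 d2 := by
  have he1 := crossover_nonneg (𝒳 := 𝒳) hd1
  have he2 := crossover_nonneg (𝒳 := 𝒴) hd2
  have hk1 : Fintype.card 𝒳 * crossover 𝒳 d1 < 1 :=
    card_mul_lt_one hq fun t => by linarith [h t]
  have hk2 : Fintype.card 𝒴 * crossover 𝒴 d2 < 1 :=
    card_mul_lt_one hq.swap fun t => show _ < q (t.2, t.1) by linarith [h (t.2, t.1)]
  have hs := hq.backwardSource₂ he1 he2 hk1 hk2 fun t => (h t).le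
  obtain ⟨W, hW, hjoint⟩ := exists_isCondPmf_joint_eq
    (p := fun t : (𝒳 × 𝒴) × (𝒳 × 𝒴) => backwardSource₂ _ _ q t.2 *
      symmChannel (crossover 𝒴 d2) t.1.2 t.2.2 * symmChannel (crossover 𝒳 d1) t.1.1 t.2.1)
    (fun t => mul_nonneg (mul_nonneg (hs.1 _) ((isPmf_symmChannel he2 hk2 _).1 _))
      ((isPmf_symmChannel he1 hk1 _).1 _))
    (fun t => (add_nonneg he1 he2).trans_lt (h t))
    (sum_backwardSource₂_mul_symmChannel hk1 hk2 q)
  have hX (t : 𝒳 × 𝒴 × (𝒳 × 𝒴)) := congrFun hjoint ((t.1, t.2.1), t.2.2)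
  have hY (t : 𝒴 × 𝒳 × (𝒳 × 𝒴)) :=
    (congrFun hjoint ((t.2.1, t.1), t.2.2)).trans (mul_right_comm _ _ _)
  have hrX := hs.mul_symmChannel he2 hk2 Prod.snd
  have hrY := hs.mul_symmChannel he1 hk1 Prod.fst
  refine ⟨W, hW, ?_, ?_, congrArg₂ max ?_ ?_⟩
  · simpa only [Fintype.sum_prod_type] using! sum_mul_dHam_le hd1 hrX Prod.fst hX
  · rw [Finset.sum_comm]
    simpa only [Fintype.sum_prod_type] using! sum_mul_dHam_le hd2 hrY Prod.snd hY
  · exact ((condMI_eq_hammingRD hd1 hk1 hrX Prod.fst hX).trans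
      (congrArg (hammingRD · d1) (funext (sum_joint hW)))).symm
  · exact ((condMI_eq_hammingRD hd2 hk2 hrY Prod.snd hY).trans
      (congrArg (hammingRD · d2) (funext fun s => sum_joint hW (s.2, s.1)))).symm

end Achievability

section SmallDistortions

variable {𝒳 𝒴 Xh Yh : Type} [Fintype 𝒳] [Fintype 𝒴]

theorem CRAchievable.rdAchievable {q : 𝒳 × 𝒴 → ℝ} {δ1 : 𝒳 → Xh → ℝ} {δ2 : 𝒴 → Yh → ℝ}
    {d1 d2 r : ℝ} (h : CRAchievable q δ1 δ2 d1 d2 r) : RDAchievable q δ1 δ2 d1 d2 r := by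
  intro ε hε
  obtain ⟨n, m, f, g1, g2, -, -, hn, hrate, hD1, hD2, -⟩ := h ε hε
  exact ⟨n, m, f, g1, g2, hn, hrate, hD1, hD2⟩

theorem RDAchievable.swap {q : 𝒳 × 𝒴 → ℝ} {δ1 : 𝒳 → Xh → ℝ} {δ2 : 𝒴 → Yh → ℝ} {d1 d2 r : ℝ}
    (h : RDAchievable q δ1 δ2 d1 d2 r) : RDAchievable (swap q) δ2 δ1 d2 d1 r := by
  intro ε hε
  obtain ⟨n, m, f, g1, g2, hn, hrate, hD1, hD2⟩ := h ε hε
  let e := Equiv.prodComm (Fin n → 𝒴) (Fin n → 𝒳)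
  exact ⟨n, m, fun s => f (e s), g2, g1, hn, hrate,
    (e.sum_comp fun t => iid q n t * ((n : ℝ)⁻¹ * ∑ i, δ2 (t.2 i) (g2 (f t, t.1) i))).trans_le hD2,
    (e.sum_comp fun t => iid q n t * ((n : ℝ)⁻¹ * ∑ i, δ1 (t.1 i) (g1 (f t, t.2) i))).trans_le hD1⟩

theorem CRRD_eq_and_RD_eq_of_mem_crFormulaSet [Fintype Xh] [Fintype Yh] {q : 𝒳 × 𝒴 → ℝ}
    (hq : IsPmf q) {δ1 : 𝒳 → Xh → ℝ} {δ2 : 𝒴 → Yh → ℝ} {d1 d2 F : ℝ}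
    (hF : F ∈ crFormulaSet q δ1 δ2 d1 d2)
    (hle : ∀ r, RDAchievable q δ1 δ2 d1 d2 r → F ≤ r) :
    CRRD q δ1 δ2 d1 d2 = F ∧ RD q δ1 δ2 d1 d2 = F := by
  have h0 := nonneg_of_mem_crFormulaSet hq hF
  have hCR := crAchievable_of_mem_crFormulaSet hq hF
  exact ⟨IsLeast.csInf_eq ⟨⟨h0, hCR⟩, fun r hr => hle r hr.2.rdAchievable⟩,
    IsLeast.csInf_eq ⟨⟨h0, hCR.rdAchievable⟩, fun r hr => hle r hr.2⟩⟩

theorem crossover_le [Nonempty 𝒳] {d : ℝ} (hd : 0 ≤ d) : crossover 𝒳 d ≤ d := by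
  obtain h | h := subsingleton_or_nontrivial 𝒳
  · obtain ⟨_⟩ := nonempty_unique 𝒳
    simpa [crossover] using hd
  · have : (2 : ℝ) ≤ Fintype.card 𝒳 := Nat.ofNat_le_cast.2 Fintype.one_lt_card
    exact div_le_self hd (by linarith)

theorem CRRD_eq_and_RD_eq_max_condRD [Nonempty 𝒳] [Nonempty 𝒴] {q : 𝒳 × 𝒴 → ℝ} (hq : IsPmf q)
    {d1 d2 : ℝ} (hd1 : 0 ≤ d1) (hd2 : 0 ≤ d2) (h : ∀ t, crossover 𝒳 d1 + crossover 𝒴 d2 < q t) :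
    CRRD q dHam dHam d1 d2 = max (condRD q dHam d1) (condRD (swap q) dHam d2) ∧
      RD q dHam dHam d1 d2 = max (condRD q dHam d1) (condRD (swap q) dHam d2) := by
  have he1 := crossover_nonneg (𝒳 := 𝒳) hd1
  have he2 := crossover_nonneg (𝒳 := 𝒴) hd2
  have hlt1 (t) : crossover 𝒳 d1 < q t := by linarith [h t]
  have hlt2 (t) : crossover 𝒴 d2 < swap q t := show _ < q (t.2, t.1) by linarith [h (t.2, t.1)]
  rw [condRD_dHam_eq_hammingRD hq hd1 hlt1, condRD_dHam_eq_hammingRD hq.swap hd2 hlt2]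
  refine CRRD_eq_and_RD_eq_of_mem_crFormulaSet hq (max_hammingRD_mem_crFormulaSet hq hd1 hd2 h)
    fun r hr => max_le ?_ ?_
  · exact hammingRD_le_of_rdAchievable hq hd1 (card_mul_lt_one hq hlt1) hr
  · exact hammingRD_le_of_rdAchievable hq.swap hd2 (card_mul_lt_one hq.swap hlt2) hr.swap

end SmallDistortions

end TWR

open TWR in
/-- Theorem 2: for a full-support source and Hamming
distortions there is a strictly positive region of small distortions where
`R_CR(d1,d2) = R(d1,d2) = max{R_{X|Y}(d1), R_{Y|X}(d2)}`. -/
theorem small_distortion_region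
    {𝒳 𝒴 : Type} [Fintype 𝒳] [Fintype 𝒴]
    (q : 𝒳 × 𝒴 → ℝ) (hq : IsPmf q) (hsupp : ∀ x y, 0 < q (x, y)) :
    ∃ d1s > (0 : ℝ), ∃ d2s > (0 : ℝ), ∀ d1 d2 : ℝ,
      0 ≤ d1 → d1 ≤ d1s → 0 ≤ d2 → d2 ≤ d2s →
      CRRD q (dHam (α := 𝒳)) (dHam (α := 𝒴)) d1 d2 =
        RD q (dHam (α := 𝒳)) (dHam (α := 𝒴)) d1 d2 ∧
      RD q (dHam (α := 𝒳)) (dHam (α := 𝒴)) d1 d2 =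
        max (condRD q (dHam (α := 𝒳)) d1) (condRD (swap q) (dHam (α := 𝒴)) d2) := by
  obtain ⟨t₀, -, -⟩ := Finset.exists_ne_zero_of_sum_ne_zero (hq.2.trans_ne one_ne_zero)
  have : Nonempty 𝒳 := ⟨t₀.1⟩
  have : Nonempty 𝒴 := ⟨t₀.2⟩
  obtain ⟨t, hmin⟩ := Finite.exists_min q
  have hpos : 0 < q t := hsupp t.1 t.2
  refine ⟨q t / 3, by positivity, q t / 3, by positivity, fun d1 d2 hd1 hd1s hd2 hd2s => ?_⟩
  obtain ⟨hCR, hRD⟩ := CRRD_eq_and_RD_eq_max_condRD hq hd1 hd2 fun s => by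
    linarith [crossover_le (𝒳 := 𝒳) hd1, crossover_le (𝒳 := 𝒴) hd2, hmin s]
  exact ⟨hCR.trans hRD.symm, hRD⟩
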